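/- (Toeplitz-corona theorem on the bidisk) Let φ₁,…,φ_N be bounded analytic functions on 𝔻² and let δ > 0. The following are equivalent: (i) for every admissible kernel k on 𝔻², the function (ζ,λ) ↦ [∑_{i=1}^N φ_i(ζ) \overline{φ_i(λ)} − δ] k(ζ,λ) is positive semi-definite on 𝔻² × 𝔻²; (ii) there exist bounded analytic functions ψ₁,…,ψ_N on 𝔻² such that ∑_{i=1}^N ψ_i(λ) φ_i(λ) = 1 for all λ ∈ 𝔻² and sup_{λ∈𝔻²} ∑_{i=1}^N |ψ_i(λ)|² ≤ 1/δ. -/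

import Mathlib

open Finset
open scoped ComplexOrder

/-- The open bidisk in `ℂ × ℂ`. -/
def Bidisk : Set (ℂ × ℂ) := {lam : ℂ × ℂ | ‖lam.1‖ < 1 ∧ ‖lam.2‖ < 1}

/-- A kernel on the bidisk is positive semi-definite if all its finite Gram sums over
points of `𝔻²` are nonnegative. -/
def IsPSDKernel (k : ℂ × ℂ → ℂ × ℂ → ℂ) : Prop :=
  ∀ (n : ℕ) (mu : Fin n → ℂ × ℂ), (∀ i, mu i ∈ Bidisk) → ∀ a : Fin n → ℂ,
    0 ≤ ∑ i, ∑ j, a i * starRingEnd ℂ (a j) * k (mu i) (mu j)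

/-- A kernel `k` on `𝔻²` is admissible if `k` and both kernels
`(ζ,λ) ↦ (1 - ζʳ λ̄ʳ) k(ζ,λ)`, `r = 1, 2`, are positive semi-definite. -/
def IsAdmissibleKernel (k : ℂ × ℂ → ℂ × ℂ → ℂ) : Prop :=
  IsPSDKernel k ∧
  IsPSDKernel (fun zeta lam => (1 - zeta.1 * starRingEnd ℂ lam.1) * k zeta lam) ∧
  IsPSDKernel (fun zeta lam => (1 - zeta.2 * starRingEnd ℂ lam.2) * k zeta lam)

/-- Positive semi-definite kernels on an arbitrary type. -/
def PSDk {X : Type*} (k : X → X → ℂ) : Prop :=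
  ∀ (n : ℕ) (mu : Fin n → X) (a : Fin n → ℂ),
    0 ≤ ∑ i, ∑ j, a i * starRingEnd ℂ (a j) * k (mu i) (mu j)

lemma PSDk.herm {X : Type*} {k : X → X → ℂ} (h : PSDk k) (x y : X) :
    starRingEnd ℂ (k x y) = k y x := by
  have h1 := h 2 ![x, y] ![1, 1]
  have h2 := h 2 ![x, y] ![1, Complex.I]
  have h3 := h 2 ![x, y] ![1, 0]
  have h4 := h 2 ![x, y] ![0, 1]
  simp [Fin.sum_univ_two, Complex.le_def] at h1 h2 h3 h4
  apply Complex.ext <;> simp <;> linarith [h1.2, h2.2]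

lemma PSDk.diag_nonneg {X : Type*} {k : X → X → ℂ} (h : PSDk k) (x : X) :
    0 ≤ k x x := by
  have h1 := h 1 ![x] ![1]
  simpa using h1

lemma PSDk.comp {X Y : Type*} {k : X → X → ℂ} (h : PSDk k) (f : Y → X) :
    PSDk (fun x y => k (f x) (f y)) := fun n mu a => h n (fun i => f (mu i)) a

/-- The quadratic form of a kernel on `Fin n`. -/
noncomputable def QF {n : ℕ} (k : Fin n → Fin n → ℂ) (a : Fin n → ℂ) : ℝ :=
  (∑ i, ∑ j, a i * starRingEnd ℂ (a j) * k i j).re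

lemma PSDk.exists_factor {n : ℕ} {k : Fin n → Fin n → ℂ} (h : PSDk k) :
    ∃ d : (Fin n → ℂ) →ₗ[ℂ] EuclideanSpace ℂ (Fin n), ∀ a, ‖d a‖ ^ 2 = QF k a := by
  classical
  have hA : (Matrix.of fun i j => k j i).PosSemidef := by
    rw [Matrix.posSemidef_iff_dotProduct_mulVec]
    refine ⟨?_, fun x => ?_⟩
    · ext i j
      simp [Matrix.conjTranspose_apply, h.herm]
    · have := h n id x
      rw [Finset.sum_comm] at this
      convert this using 1
      simp only [dotProduct, Matrix.mulVec, Finset.mul_sum, Matrix.of_apply]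
      refine Finset.sum_congr rfl fun i _ => Finset.sum_congr rfl fun j _ => ?_
      simp; ring
  obtain ⟨B, hB⟩ : ∃ B : Matrix (Fin n) (Fin n) ℂ, (Matrix.of fun i j => k j i) = star B * B := by
    open scoped MatrixOrder Matrix.Norms.L2Operator in
    exact CStarAlgebra.nonneg_iff_eq_star_mul_self.mp hA.nonneg
  refine ⟨(WithLp.linearEquiv 2 ℂ (Fin n → ℂ)).symm.toLinearMap ∘ₗ B.mulVecLin, fun a => ?_⟩
  have h1 : ((‖(WithLp.linearEquiv 2 ℂ (Fin n → ℂ)).symm (B.mulVec a)‖ ^ 2 : ℝ) : ℂ)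
      = star (B.mulVec a) ⬝ᵥ (B.mulVec a) := by
    rw [EuclideanSpace.norm_sq_eq]
    simp [dotProduct, ← Complex.normSq_eq_norm_sq, Complex.normSq_eq_conj_mul_self]
  have h2 : star (B.mulVec a) ⬝ᵥ (B.mulVec a) = ∑ i, ∑ j, a i * starRingEnd ℂ (a j) * k i j := by
    rw [Matrix.star_mulVec, ← Matrix.dotProduct_mulVec, Matrix.mulVec_mulVec,
      ← Matrix.star_eq_conjTranspose, ← hB, Finset.sum_comm]
    simp only [dotProduct, Matrix.mulVec, Finset.mul_sum, Matrix.of_apply]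
    refine Finset.sum_congr rfl fun i _ => Finset.sum_congr rfl fun j _ => ?_
    simp; ring
  simp only [QF, ← h2, ← h1, Complex.ofReal_re]
  rfl

lemma exists_unitary_of_norm_eq {V E : Type*} [AddCommGroup V] [Module ℂ V]
    [NormedAddCommGroup E] [InnerProductSpace ℂ E] [FiniteDimensional ℂ E]
    (f g : V →ₗ[ℂ] E) (h : ∀ x, ‖f x‖ = ‖g x‖) : ∃ G : E ≃ₗᵢ[ℂ] E, ∀ x, G (f x) = g x := by
  have hker : LinearMap.ker f ≤ LinearMap.ker g := by
    intro x hx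
    rw [LinearMap.mem_ker] at hx ⊢
    rw [← norm_eq_zero, ← h, hx, norm_zero]
  let q : LinearMap.range f →ₗ[ℂ] E :=
    ((LinearMap.ker f).liftQ g hker) ∘ₗ f.quotKerEquivRange.symm.toLinearMap
  have hq : ∀ x, q ⟨f x, x, rfl⟩ = g x := by
    intro x
    have : f.quotKerEquivRange.symm ⟨f x, x, rfl⟩ = (LinearMap.ker f).mkQ x := by
      rw [LinearEquiv.symm_apply_eq]; rfl
    simp only [q, LinearMap.comp_apply, LinearEquiv.coe_coe, this]
    simp
  let L : LinearMap.range f →ₗᵢ[ℂ] E := ⟨q, by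
    rintro ⟨_, x, rfl⟩
    rw [hq, ← h]; rfl⟩
  refine ⟨L.extend.toLinearIsometryEquiv rfl, fun x => ?_⟩
  have := L.extend_apply ⟨f x, x, rfl⟩
  simp only [LinearIsometry.coe_toLinearIsometryEquiv]
  rw [this]
  exact hq x

lemma exists_joint_eigenbasis {K : Type*} [NormedAddCommGroup K] [InnerProductSpace ℂ K]
    [FiniteDimensional ℂ K] (X Y : K ≃ₗᵢ[ℂ] K) (hXY : ∀ v, X (Y v) = Y (X v)) :
    ∃ (n : ℕ) (b : OrthonormalBasis (Fin n) ℂ K) (s t : Fin n → ℂ),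
      (∀ j, ‖s j‖ = 1) ∧ (∀ j, ‖t j‖ = 1) ∧ (∀ j, X (b j) = s j • b j) ∧
      (∀ j, Y (b j) = t j • b j) := by
  classical
  let lin (Z : K ≃ₗᵢ[ℂ] K) : Module.End ℂ K := Z.toLinearEquiv.toLinearMap
  have hlin : ∀ Z v, lin Z v = Z v := fun _ _ => rfl
  let T : Fin 4 → Module.End ℂ K := ![lin X + lin X.symm, Complex.I • (lin X - lin X.symm),
    lin Y + lin Y.symm, Complex.I • (lin Y - lin Y.symm)]
  have hadj : ∀ (Z : K ≃ₗᵢ[ℂ] K) u v, inner ℂ (Z u) v = inner ℂ u (Z.symm v) := by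
    intro Z u v
    rw [← Z.inner_map_map u, Z.apply_symm_apply]
  have hadj2 : ∀ (Z : K ≃ₗᵢ[ℂ] K) u v, inner ℂ (Z.symm u) v = inner ℂ u (Z v) := by
    intro Z u v
    rw [hadj Z.symm]; rfl
  have hT : ∀ i, (T i).IsSymmetric := by
    intro i u v
    fin_cases i <;>
      simp [T, hlin, inner_add_left, inner_add_right, inner_sub_left, inner_sub_right,
        inner_smul_left, inner_smul_right, hadj] <;> ring
  have c1 : Commute (lin X) (lin Y) := by
    ext v; simp [hlin, hXY]
  have c2 : Commute (lin X) (lin Y.symm) := by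
    ext v; simp only [Module.End.mul_apply, hlin]
    rw [LinearIsometryEquiv.eq_symm_apply, ← hXY, Y.apply_symm_apply]
  have c3 : Commute (lin X.symm) (lin Y) := by
    ext v; simp only [Module.End.mul_apply, hlin]
    rw [LinearIsometryEquiv.symm_apply_eq, hXY, X.apply_symm_apply]
  have c4 : Commute (lin X.symm) (lin Y.symm) := by
    ext v; simp only [Module.End.mul_apply, hlin]
    rw [LinearIsometryEquiv.symm_apply_eq, LinearIsometryEquiv.symm_apply_eq, ← hXY]; simp
  have c5 : Commute (lin X) (lin X.symm) := by
    ext v; simp [hlin]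
  have c6 : Commute (lin Y) (lin Y.symm) := by
    ext v; simp [hlin]
  have d1 : Commute (T 0) (T 1) := by
    refine Commute.smul_right ?_ _
    exact ((Commute.refl _).sub_right c5).add_left (c5.symm.sub_right (Commute.refl _))
  have d2 : Commute (T 2) (T 3) := by
    refine Commute.smul_right ?_ _
    exact ((Commute.refl _).sub_right c6).add_left (c6.symm.sub_right (Commute.refl _))
  have d3 : Commute (T 0) (T 2) := (c1.add_right c2).add_left (c3.add_right c4)
  have d4 : Commute (T 0) (T 3) :=
    Commute.smul_right ((c1.sub_right c2).add_left (c3.sub_right c4)) _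
  have d5 : Commute (T 1) (T 2) :=
    Commute.smul_left ((c1.add_right c2).sub_left (c3.add_right c4)) _
  have d6 : Commute (T 1) (T 3) :=
    Commute.smul_left (Commute.smul_right ((c1.sub_right c2).sub_left (c3.sub_right c4)) _) _
  have hC : Pairwise (Function.onFun Commute T) := by
    intro i j hij
    fin_cases i <;> fin_cases j <;> first
      | exact absurd rfl hij
      | exact d1
      | exact d1.symm
      | exact d2
      | exact d2.symm
      | exact d3
      | exact d3.symm
      | exact d4
      | exact d4.symm
      | exact d5
      | exact d5.symm
      | exact d6
      | exact d6.symm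
  have hI := LinearMap.IsSymmetric.directSum_isInternal_of_pairwise_commute hT hC
  have hO := LinearMap.IsSymmetric.orthogonalFamily_iInf_eigenspaces hT
  have hfin := WellFoundedGT.finite_ne_bot_of_iSupIndep hI.submodule_iSupIndep
  have hI' := DirectSum.isInternal_ne_bot_iff.mpr hI
  have hO' := hO.comp (γ := {α : Fin 4 → ℂ // (⨅ j, Module.End.eigenspace (T j) (α j)) ≠ ⊥})
    Subtype.val_injective
  have : Fintype {α : Fin 4 → ℂ // (⨅ j, Module.End.eigenspace (T j) (α j)) ≠ ⊥} :=
    hfin.fintype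
  let b := hI'.subordinateOrthonormalBasis rfl hO'
  have hb : ∀ j, ∃ χ : Fin 4 → ℂ, ∀ i, T i (b j) = χ i • b j := by
    intro j
    have h1 := hI'.subordinateOrthonormalBasis_subordinate rfl j hO'
    rw [Submodule.mem_iInf] at h1
    exact ⟨_, fun i => Module.End.mem_eigenspace_iff.mp (h1 i)⟩
  choose χ hχ using hb
  have hX : ∀ j, X (b j) = ((χ j 0 - Complex.I * χ j 1) / 2) • b j := by
    intro j
    have e0 : X (b j) + X.symm (b j) = χ j 0 • b j := hχ j 0
    have e1 : Complex.I • (X (b j) - X.symm (b j)) = χ j 1 • b j := hχ j 1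
    have e2 : X (b j) - X.symm (b j) = -(Complex.I * χ j 1) • b j := by
      rw [neg_smul, mul_smul, ← e1, smul_smul, Complex.I_mul_I]; simp
    have e3 : (2 : ℂ) • X (b j) = (χ j 0 - Complex.I * χ j 1) • b j := by
      rw [sub_eq_add_neg, add_smul, ← e0, ← e2, two_smul]; abel
    rw [div_eq_inv_mul, mul_smul, ← e3, smul_smul]; norm_num
  have hY : ∀ j, Y (b j) = ((χ j 2 - Complex.I * χ j 3) / 2) • b j := by
    intro j
    have e0 : Y (b j) + Y.symm (b j) = χ j 2 • b j := hχ j 2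
    have e1 : Complex.I • (Y (b j) - Y.symm (b j)) = χ j 3 • b j := hχ j 3
    have e2 : Y (b j) - Y.symm (b j) = -(Complex.I * χ j 3) • b j := by
      rw [neg_smul, mul_smul, ← e1, smul_smul, Complex.I_mul_I]; simp
    have e3 : (2 : ℂ) • Y (b j) = (χ j 2 - Complex.I * χ j 3) • b j := by
      rw [sub_eq_add_neg, add_smul, ← e0, ← e2, two_smul]; abel
    rw [div_eq_inv_mul, mul_smul, ← e3, smul_smul]; norm_num
  refine ⟨_, b, _, _, fun j => ?_, fun j => ?_, hX, hY⟩
  · have := X.norm_map (b j)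
    rw [hX, norm_smul, b.norm_eq_one, mul_one] at this
    exact this
  · have := Y.norm_map (b j)
    rw [hY, norm_smul, b.norm_eq_one, mul_one] at this
    exact this

/-- Evaluation of a two-variable polynomial given by a coefficient array. -/
noncomputable def evP (R : ℕ) (c : ℕ → ℕ → ℂ) (z w : ℂ) : ℂ :=
  ∑ a ∈ range R, ∑ b ∈ range R, c a b * (z ^ a * w ^ b)

lemma vonNeumann_unitary {K : Type*} [NormedAddCommGroup K] [InnerProductSpace ℂ K]
    [FiniteDimensional ℂ K] (X Y : K ≃ₗᵢ[ℂ] K) (hXY : ∀ v, X (Y v) = Y (X v))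
    {N : ℕ} (R : ℕ) (c : Fin N → ℕ → ℕ → ℂ) (C : ℝ)
    (hC : ∀ s t : ℂ, ‖s‖ = 1 → ‖t‖ = 1 → ∑ i, ‖evP R (c i) s t‖ ^ 2 ≤ C) (x : Fin N → K) :
    ‖∑ i, ∑ a ∈ range R, ∑ b ∈ range R, c i a b • (X^[a] (Y^[b] (x i)))‖ ^ 2
      ≤ C * ∑ i, ‖x i‖ ^ 2 := by
  obtain ⟨n, b, s, t, hs, ht, hX, hY⟩ := exists_joint_eigenbasis X Y hXY
  have key : ∀ (Z : K ≃ₗᵢ[ℂ] K) (r : Fin n → ℂ), (∀ j, ‖r j‖ = 1) → (∀ j, Z (b j) = r j • b j) →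
      ∀ j v, inner ℂ (b j) (Z v) = r j * inner ℂ (b j) v := by
    intro Z r hr hZ j v
    have h1 : inner ℂ (Z (b j)) (Z v) = inner ℂ (b j) v := Z.inner_map_map _ _
    rw [hZ, inner_smul_left] at h1
    rw [← h1, ← mul_assoc, Complex.mul_conj, Complex.normSq_eq_norm_sq, hr]
    simp
  have keyn : ∀ (Z : K ≃ₗᵢ[ℂ] K) (r : Fin n → ℂ), (∀ j, ‖r j‖ = 1) → (∀ j, Z (b j) = r j • b j) →
      ∀ j m v, inner ℂ (b j) (Z^[m] v) = r j ^ m * inner ℂ (b j) v := by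
    intro Z r hr hZ j m
    induction m with
    | zero => intro v; simp
    | succ m ih =>
      intro v
      rw [Function.iterate_succ_apply', key Z r hr hZ, ih, pow_succ]; ring
  have hn : ∀ v : K, ‖v‖ ^ 2 = ∑ j, ‖inner ℂ (b j) v‖ ^ 2 := fun v =>
    (b.sum_sq_norm_inner_right v).symm
  have hx : ∑ i, ‖x i‖ ^ 2 = ∑ j, ∑ i, ‖inner ℂ (b j) (x i)‖ ^ 2 := by
    rw [Finset.sum_comm]
    exact Finset.sum_congr rfl fun i _ => hn _
  rw [hn, hx, Finset.mul_sum]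
  refine Finset.sum_le_sum fun j _ => ?_
  have e1 : inner ℂ (b j) (∑ i, ∑ a ∈ range R, ∑ b ∈ range R, c i a b • (X^[a] (Y^[b] (x i))))
      = ∑ i, evP R (c i) (s j) (t j) * inner ℂ (b j) (x i) := by
    simp only [inner_sum, inner_smul_right, keyn X s hs hX, keyn Y t ht hY, evP, Finset.sum_mul]
    refine Finset.sum_congr rfl fun i _ => Finset.sum_congr rfl fun a _ =>
      Finset.sum_congr rfl fun b _ => ?_
    ring
  rw [e1]
  calc ‖∑ i, evP R (c i) (s j) (t j) * inner ℂ (b j) (x i)‖ ^ 2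
      ≤ (∑ i, ‖evP R (c i) (s j) (t j)‖ * ‖inner ℂ (b j) (x i)‖) ^ 2 := by
        gcongr
        simp_rw [← norm_mul]
        exact norm_sum_le _ _
    _ ≤ (∑ i, ‖evP R (c i) (s j) (t j)‖ ^ 2) * ∑ i, ‖inner ℂ (b j) (x i)‖ ^ 2 :=
        Finset.sum_mul_sq_le_sq_mul_sq _ _ _
    _ ≤ _ := by
        gcongr
        exact hC _ _ (hs j) (ht j)

lemma QF_nonneg {n : ℕ} {k : Fin n → Fin n → ℂ} (h : PSDk k) (a : Fin n → ℂ) : 0 ≤ QF k a := by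
  have := h n id a
  exact (Complex.le_def.mp this).1

lemma QF_defect {n : ℕ} (k : Fin n → Fin n → ℂ) (z a : Fin n → ℂ) :
    QF (fun i j => (1 - z i * starRingEnd ℂ (z j)) * k i j) a = QF k a - QF k (z * a) := by
  simp only [QF, ← Complex.sub_re, ← Finset.sum_sub_distrib]
  congr 1
  refine Finset.sum_congr rfl fun i _ => Finset.sum_congr rfl fun j _ => ?_
  simp; ring

lemma QF_continuous {n : ℕ} (k : Fin n → Fin n → ℂ) : Continuous (QF k) := by
  unfold QF
  refine Complex.continuous_re.comp ?_
  refine continuous_finsetSum _ fun i _ => continuous_finsetSum _ fun j _ => ?_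
  refine Continuous.mul (Continuous.mul (continuous_apply i) ?_) continuous_const
  exact Complex.continuous_conj.comp (continuous_apply j)

/-- The cyclic swap-shift on `E₀ ⊕ E₀`-valued sequences. -/
lemma exists_swapShift (E₀ : Type*) [NormedAddCommGroup E₀] [InnerProductSpace ℂ E₀]
    [FiniteDimensional ℂ E₀] (L : ℕ) :
    ∃ J : PiLp 2 (fun _ : Fin (L + 1) => WithLp 2 (E₀ × E₀)) ≃ₗᵢ[ℂ]
        PiLp 2 (fun _ : Fin (L + 1) => WithLp 2 (E₀ × E₀)),
      ∀ c i, J c i = WithLp.toLp 2 ((c (i + 1)).snd, (c i).fst) := by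
  let J₀ : PiLp 2 (fun _ : Fin (L + 1) => WithLp 2 (E₀ × E₀)) →ₗᵢ[ℂ]
        PiLp 2 (fun _ : Fin (L + 1) => WithLp 2 (E₀ × E₀)) :=
    { toFun := fun c => WithLp.toLp 2 fun i => WithLp.toLp 2 ((c (i + 1)).snd, (c i).fst)
      map_add' := by
        intro c c'
        rfl
      map_smul' := by
        intro r c
        rfl
      norm_map' := by
        intro c
        rw [← sq_eq_sq₀ (norm_nonneg _) (norm_nonneg _)]
        rw [PiLp.norm_sq_eq_of_L2, PiLp.norm_sq_eq_of_L2]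
        simp only [WithLp.prod_norm_sq_eq_of_L2, Finset.sum_add_distrib]
        rw [add_comm]
        congr 1
        exact Equiv.sum_comp (Equiv.addRight (1 : Fin (L + 1))) (fun i => ‖(c i).snd‖ ^ 2) }
  exact ⟨J₀.toLinearIsometryEquiv rfl, fun c i => rfl⟩

lemma ando_ineq {n N : ℕ} {k : Fin n → Fin n → ℂ} {z w : Fin n → ℂ}
    (hz : ∀ j, ‖z j‖ < 1) (hw : ∀ j, ‖w j‖ < 1) (hk : PSDk k)
    (h1 : PSDk (fun i j => (1 - z i * starRingEnd ℂ (z j)) * k i j))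
    (h2 : PSDk (fun i j => (1 - w i * starRingEnd ℂ (w j)) * k i j))
    (R : ℕ) (c : Fin N → ℕ → ℕ → ℂ) (C : ℝ) (hC0 : 0 ≤ C)
    (hC : ∀ s t : ℂ, ‖s‖ = 1 → ‖t‖ = 1 → ∑ i, ‖evP R (c i) s t‖ ^ 2 ≤ C)
    (x : Fin N → Fin n → ℂ) :
    QF k (fun j => ∑ i, evP R (c i) (z j) (w j) * x i j) ≤ C * ∑ i, QF k (x i) := by
  obtain ⟨d1, hd1⟩ := h1.exists_factor
  obtain ⟨d2, hd2⟩ := h2.exists_factor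
  simp only [QF_defect] at hd1 hd2
  let E₀ := EuclideanSpace ℂ (Fin n)
  let E := WithLp 2 (E₀ × E₀)
  let Δ : (Fin n → ℂ) →ₗ[ℂ] E := (WithLp.linearEquiv 2 ℂ (E₀ × E₀)).symm.toLinearMap ∘ₗ
    (LinearMap.prod (d2 ∘ₗ LinearMap.mulLeft ℂ z) d1)
  let Δ' : (Fin n → ℂ) →ₗ[ℂ] E := (WithLp.linearEquiv 2 ℂ (E₀ × E₀)).symm.toLinearMap ∘ₗ
    (LinearMap.prod (d1 ∘ₗ LinearMap.mulLeft ℂ w) d2)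
  have hΔ : ∀ a, Δ a = WithLp.toLp 2 (d2 (z * a), d1 a) := fun a => rfl
  have hΔ' : ∀ a, Δ' a = WithLp.toLp 2 (d1 (w * a), d2 a) := fun a => rfl
  have nΔ : ∀ a, ‖Δ a‖ ^ 2 = QF k a - QF k ((z * w) * a) := by
    intro a
    rw [hΔ, WithLp.prod_norm_sq_eq_of_L2]
    change ‖d2 (z * a)‖ ^ 2 + ‖d1 a‖ ^ 2 = _
    rw [hd1, hd2]
    rw [show w * (z * a) = z * w * a by ring]; ring
  have nΔ' : ∀ a, ‖Δ' a‖ ^ 2 = QF k a - QF k ((z * w) * a) := by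
    intro a
    rw [hΔ', WithLp.prod_norm_sq_eq_of_L2]
    change ‖d1 (w * a)‖ ^ 2 + ‖d2 a‖ ^ 2 = _
    rw [hd1, hd2]
    rw [show z * (w * a) = z * w * a by ring]; ring
  obtain ⟨G, hG⟩ := exists_unitary_of_norm_eq Δ' Δ (fun a => by
    rw [← sq_eq_sq₀ (norm_nonneg _) (norm_nonneg _), nΔ, nΔ'])
  have tele : ∀ (a : Fin n → ℂ) (M : ℕ), ∑ i ∈ range M, ‖Δ ((z * w) ^ i * a)‖ ^ 2
      = QF k a - QF k ((z * w) ^ M * a) := by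
    intro a M
    induction M with
    | zero => simp
    | succ M ih =>
      rw [Finset.sum_range_succ, ih, nΔ, pow_succ]
      rw [show z * w * ((z * w) ^ M * a) = (z * w) ^ M * (z * w) * a by ring]
      ring
  set y : Fin n → ℂ := fun j => ∑ i, evP R (c i) (z j) (w j) * x i j with hy
  have hy' : y = ∑ i, ∑ a ∈ range R, ∑ b ∈ range R, c i a b • (z ^ a * (w ^ b * x i)) := by
    ext j
    simp only [hy, Finset.sum_apply, evP, Finset.sum_mul, Pi.smul_apply, Pi.mul_apply, Pi.pow_apply,
      smul_eq_mul]
    refine Finset.sum_congr rfl fun i _ => Finset.sum_congr rfl fun a _ =>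
      Finset.sum_congr rfl fun b _ => ?_
    ring
  have main : ∀ M : ℕ, QF k y - QF k ((z * w) ^ M * y) ≤ C * ∑ i, QF k (x i) := by
    intro M
    obtain ⟨L, hL⟩ : ∃ L, L = M + 2 * R := ⟨_, rfl⟩
    obtain ⟨J, hJ⟩ := exists_swapShift E₀ L
    let Gt : PiLp 2 (fun _ : Fin (L + 1) => E) ≃ₗᵢ[ℂ] PiLp 2 (fun _ : Fin (L + 1) => E) :=
      LinearIsometryEquiv.piLpCongrRight 2 (fun _ => G)
    have hGt : ∀ v i, Gt v i = G (v i) := fun v i => rfl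
    have hGts : ∀ v i, Gt.symm v i = G.symm (v i) := fun v i => rfl
    have hJJ : ∀ v i, J (J v) i = v (i + 1) := by
      intro v i
      rw [hJ, hJ, hJ]
      rfl
    let X := J.trans Gt
    let Y := Gt.symm.trans J
    have hX : ∀ v, X v = Gt (J v) := fun v => rfl
    have hY : ∀ v, Y v = J (Gt.symm v) := fun v => rfl
    have hXY : ∀ v, X (Y v) = Y (X v) := by
      intro v
      rw [hX, hY, hX, hY, Gt.symm_apply_apply]
      ext1 i
      rw [hJJ, hGt, hJJ, hGts, G.apply_symm_apply]
    let Agree (m : ℕ) (v : PiLp 2 (fun _ : Fin (L + 1) => E)) (a : Fin n → ℂ) : Prop :=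
      ∀ i : Fin (L + 1), i.val + m ≤ L → v i = Δ ((z * w) ^ i.val * a)
    have hval : ∀ (i : Fin (L + 1)) (m : ℕ), i.val + (m + 1) ≤ L → (i + 1).val = i.val + 1 := by
      intro i m hi
      apply Fin.val_add_one_of_lt
      rw [Fin.lt_def, Fin.val_last]; omega
    have agX : ∀ m v a, Agree m v a → Agree (m + 1) (X v) (z * a) := by
      intro m v a hv i hi
      have hvi := hval i m hi
      rw [hX, hGt, hJ, hv i (by omega), hv (i + 1) (by omega), hvi, hΔ, hΔ]
      have e := hG (z * ((z * w) ^ i.val * a))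
      rw [hΔ'] at e
      rw [show (z * w) ^ i.val * (z * a) = z * ((z * w) ^ i.val * a) by ring, ← e]
      simp only
      rw [show (z * w) ^ (i.val + 1) * a = w * (z * ((z * w) ^ i.val * a)) by ring]
      rfl
    have agY : ∀ m v a, Agree m v a → Agree (m + 1) (Y v) (w * a) := by
      intro m v a hv i hi
      have hvi := hval i m hi
      have e : ∀ a, G.symm (Δ a) = Δ' a := fun a => by
        rw [← hG, G.symm_apply_apply]
      rw [hY, hJ, hGts, hGts, hv i (by omega), hv (i + 1) (by omega), hvi, e, e, hΔ', hΔ', hΔ]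
      simp only
      rw [show (z * w) ^ (i.val + 1) * a = z * ((z * w) ^ i.val * (w * a)) by ring,
        show w * ((z * w) ^ i.val * a) = (z * w) ^ i.val * (w * a) by ring]
      rfl
    have agXn : ∀ q m v a, Agree m v a → Agree (m + q) (X^[q] v) (z ^ q * a) := by
      intro q
      induction q with
      | zero => intro m v a h; simpa using h
      | succ q ih =>
        intro m v a h
        rw [Function.iterate_succ_apply', pow_succ', mul_assoc]
        exact agX _ _ _ (ih _ _ _ h)
    have agYn : ∀ q m v a, Agree m v a → Agree (m + q) (Y^[q] v) (w ^ q * a) := by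
      intro q
      induction q with
      | zero => intro m v a h; simpa using h
      | succ q ih =>
        intro m v a h
        rw [Function.iterate_succ_apply', pow_succ', mul_assoc]
        exact agY _ _ _ (ih _ _ _ h)
    let O : (Fin n → ℂ) → PiLp 2 (fun _ : Fin (L + 1) => E) :=
      fun a => WithLp.toLp 2 fun i => Δ ((z * w) ^ i.val * a)
    have hO : ∀ a, Agree 0 (O a) a := fun a i _ => rfl
    have hOn : ∀ a, ‖O a‖ ^ 2 ≤ QF k a := by
      intro a
      rw [PiLp.norm_sq_eq_of_L2]
      have := Fin.sum_univ_eq_sum_range (fun i => ‖Δ ((z * w) ^ i * a)‖ ^ 2) (L + 1)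
      rw [tele] at this
      have h0 := QF_nonneg hk ((z * w) ^ (L + 1) * a)
      calc _ = _ := this
        _ ≤ _ := by linarith
    have agS : Agree (2 * R)
        (∑ i, ∑ a ∈ range R, ∑ b ∈ range R, c i a b • (X^[a] (Y^[b] (O (x i))))) y := by
      intro i hi
      rw [hy']
      simp only [Finset.mul_sum, map_sum, WithLp.ofLp_sum, Finset.sum_apply]
      refine Finset.sum_congr rfl fun p _ => Finset.sum_congr rfl fun a ha =>
        Finset.sum_congr rfl fun b hb => ?_
      have := agXn a _ _ _ (agYn b _ _ _ (hO (x p))) i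
        (by have := mem_range.mp ha; have := mem_range.mp hb; omega)
      rw [PiLp.smul_apply, this, mul_smul_comm, map_smul]
    have vN := vonNeumann_unitary X Y hXY R c C hC (fun i => O (x i))
    rw [← tele]
    calc ∑ i ∈ range M, ‖Δ ((z * w) ^ i * y)‖ ^ 2
        = ∑ i ∈ range (L + 1), if i < M then ‖Δ ((z * w) ^ i * y)‖ ^ 2 else 0 := by
          rw [← Finset.sum_filter]
          congr 1
          ext i; simp; omega
      _ = ∑ i : Fin (L + 1), if i.val < M then ‖Δ ((z * w) ^ i.val * y)‖ ^ 2 else 0 :=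
          (Fin.sum_univ_eq_sum_range (fun i => if i < M then ‖Δ ((z * w) ^ i * y)‖ ^ 2 else 0)
            (L + 1)).symm
      _ ≤ ‖∑ i, ∑ a ∈ range R, ∑ b ∈ range R, c i a b • (X^[a] (Y^[b] (O (x i))))‖ ^ 2 := by
          rw [PiLp.norm_sq_eq_of_L2]
          refine Finset.sum_le_sum fun i _ => ?_
          split_ifs with h
          · rw [agS i (by omega)]
          · positivity
      _ ≤ C * ∑ i, ‖O (x i)‖ ^ 2 := vN
      _ ≤ _ := by
          gcongr with i
          exact hOn _
  have lim : Filter.Tendsto (fun M : ℕ => QF k y - QF k ((z * w) ^ M * y)) Filter.atTop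
      (nhds (QF k y - QF k 0)) := by
    refine tendsto_const_nhds.sub (((QF_continuous k).tendsto 0).comp ?_)
    rw [tendsto_pi_nhds]
    intro j
    have : ‖z j * w j‖ < 1 := by
      rw [norm_mul]
      nlinarith [norm_nonneg (z j), norm_nonneg (w j), hz j, hw j]
    have := (tendsto_pow_atTop_nhds_zero_of_norm_lt_one this).mul_const (y j)
    simpa using this
  have h0 : QF k 0 = 0 := by simp [QF]
  have := le_of_tendsto' lim main
  rwa [h0, sub_zero] at this

/-- Taylor expansion of a bounded holomorphic function, with Cauchy estimates. -/
lemma taylor_bound {g : ℂ → ℂ} {M p : ℝ} (hp0 : 0 < p) (hp1 : p < 1)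
    (hg : DifferentiableOn ℂ g (Metric.ball 0 1)) (hM : ∀ z ∈ Metric.ball (0 : ℂ) 1, ‖g z‖ ≤ M) :
    ∃ b : ℕ → ℂ, (∀ n, ‖b n‖ ≤ M * (p ^ 2) ^ n) ∧
      ∀ z : ℂ, ‖z‖ ≤ 1 → HasSum (fun n => b n * z ^ n) (g ((p : ℂ) ^ 3 * z)) := by
  refine ⟨fun n => ((n.factorial : ℂ)⁻¹ * iteratedDeriv n g 0) * ((p : ℂ) ^ 3) ^ n, ?_, ?_⟩
  · intro n
    have hsub : Metric.closedBall (0 : ℂ) p ⊆ Metric.ball 0 1 := Metric.closedBall_subset_ball hp1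
    have hd : DiffContOnCl ℂ g (Metric.ball 0 p) := by
      apply DifferentiableOn.diffContOnCl
      rw [closure_ball _ hp0.ne']
      exact hg.mono hsub
    have h := Complex.norm_iteratedDeriv_le_of_forall_mem_sphere_norm_le n hp0 hd
      (fun z hz => hM z (hsub (Metric.sphere_subset_closedBall hz)))
    rw [norm_mul, norm_mul, norm_inv, norm_pow, norm_pow, Complex.norm_real, Complex.norm_natCast,
      Real.norm_of_nonneg hp0.le]
    have hf : (0 : ℝ) < n.factorial := by exact_mod_cast n.factorial_pos
    calc (n.factorial : ℝ)⁻¹ * ‖iteratedDeriv n g 0‖ * (p ^ 3) ^ n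
        ≤ (n.factorial : ℝ)⁻¹ * (n.factorial * M / p ^ n) * (p ^ 3) ^ n := by gcongr
      _ = M * (p ^ 2) ^ n := by
        have : (p ^ 3) ^ n = p ^ n * (p ^ 2) ^ n := by rw [← mul_pow]; ring
        rw [this]
        field_simp
  · intro z hz
    have hmem : (p : ℂ) ^ 3 * z ∈ Metric.ball (0 : ℂ) 1 := by
      rw [mem_ball_zero_iff, norm_mul, norm_pow, Complex.norm_real, Real.norm_of_nonneg hp0.le]
      have : p ^ 3 < 1 := pow_lt_one₀ hp0.le hp1 (by norm_num)
      nlinarith [norm_nonneg z, pow_pos hp0 3]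
    have := Complex.hasSum_taylorSeries_on_ball hg hmem
    have e : (fun n : ℕ => ((n.factorial : ℂ)⁻¹ * iteratedDeriv n g 0) * ((p : ℂ) ^ 3) ^ n * z ^ n)
        = fun n : ℕ => (n.factorial : ℂ)⁻¹ • ((p : ℂ) ^ 3 * z - 0) ^ n • iteratedDeriv n g 0 := by
      funext n
      simp only [smul_eq_mul, sub_zero]
      ring
    rw [← e] at this
    exact this

/-- Trigonometric interpolation kernel at the roots of unity. -/
noncomputable def LagR (R : ℕ) (ω : ℂ) (j : ℕ) (z : ℂ) : ℂ :=
  (R : ℂ)⁻¹ * ∑ a ∈ range R, ((ω⁻¹) ^ j) ^ a * z ^ a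

lemma LagR_norm_le {R : ℕ} (hR : 0 < R) {ω : ℂ} (hω : ‖ω‖ = 1) (j : ℕ) {z : ℂ} (hz : ‖z‖ ≤ 1) :
    ‖LagR R ω j z‖ ≤ 1 := by
  unfold LagR
  rw [norm_mul, norm_inv, Complex.norm_natCast]
  have hR' : (0 : ℝ) < R := by exact_mod_cast hR
  rw [inv_mul_le_iff₀ hR', mul_one]
  calc _ ≤ ∑ a ∈ range R, ‖((ω⁻¹) ^ j) ^ a * z ^ a‖ := norm_sum_le _ _
    _ ≤ ∑ a ∈ range R, (1 : ℝ) := by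
      refine Finset.sum_le_sum fun a _ => ?_
      rw [norm_mul, norm_pow, norm_pow, norm_inv, hω, norm_pow]
      simpa using pow_le_one₀ (norm_nonneg _) hz
    _ = R := by simp

lemma LagR_fold {R : ℕ} (hR : 0 < R) {ω : ℂ} (hω : IsPrimitiveRoot ω R) (n : ℕ) (z : ℂ) :
    ∑ j ∈ range R, LagR R ω j z * (ω ^ j) ^ n = z ^ (n % R) := by
  have hω0 : ω ≠ 0 := hω.ne_zero hR.ne'
  have hRc : (R : ℂ) ≠ 0 := by exact_mod_cast hR.ne'
  have inner : ∀ a ∈ range R, ∑ j ∈ range R, (ω ^ n * (ω⁻¹) ^ a) ^ j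
      = if a = n % R then (R : ℂ) else 0 := by
    intro a ha
    have haR := mem_range.mp ha
    split_ifs with h
    · have : ω ^ n = ω ^ a := by
        rw [h]; exact (pow_mod_orderOf ω n ▸ by rw [← hω.eq_orderOf])
      rw [this, inv_pow, mul_inv_cancel₀ (pow_ne_zero _ hω0)]
      simp
    · have hne : ω ^ n * (ω⁻¹) ^ a ≠ 1 := by
        intro h1
        apply h
        have h2 : ω ^ n = ω ^ a := by
          rw [inv_pow] at h1
          field_simp at h1
          exact h1
        have h3 : ω ^ (n % R) = ω ^ a := by
          rw [← h2, hω.eq_orderOf, pow_mod_orderOf]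
        exact (hω.pow_inj (Nat.mod_lt _ hR) haR h3).symm
      rw [geom_sum_eq hne]
      have : (ω ^ n * (ω⁻¹) ^ a) ^ R = 1 := by
        rw [mul_pow, ← pow_mul, ← pow_mul, mul_comm n, mul_comm a, pow_mul, pow_mul, inv_pow,
          hω.pow_eq_one]; simp
      rw [this]; simp
  calc ∑ j ∈ range R, LagR R ω j z * (ω ^ j) ^ n
      = (R : ℂ)⁻¹ * ∑ a ∈ range R, z ^ a * ∑ j ∈ range R, (ω ^ n * (ω⁻¹) ^ a) ^ j := by
        simp only [LagR, Finset.mul_sum, Finset.sum_mul]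
        rw [Finset.sum_comm]
        refine Finset.sum_congr rfl fun a _ => Finset.sum_congr rfl fun j _ => ?_
        rw [mul_pow, ← pow_mul, ← pow_mul, ← pow_mul, ← pow_mul, mul_comm n j, mul_comm a j]
        ring
    _ = (R : ℂ)⁻¹ * ∑ a ∈ range R, z ^ a * (if a = n % R then (R : ℂ) else 0) := by
        congr 1
        exact Finset.sum_congr rfl fun a ha => by rw [inner a ha]
    _ = z ^ (n % R) := by
        simp only [mul_ite, mul_zero]
        rw [Finset.sum_ite_eq' , if_pos (mem_range.mpr (Nat.mod_lt _ hR))]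
        field_simp

lemma interp_one {g : ℂ → ℂ} {M p : ℝ} (hp0 : 0 < p) (hp1 : p < 1) (hM0 : 0 ≤ M)
    (hg : DifferentiableOn ℂ g (Metric.ball 0 1)) (hM : ∀ z ∈ Metric.ball (0 : ℂ) 1, ‖g z‖ ≤ M)
    {R : ℕ} (hR : 0 < R) {ω : ℂ} (hω : IsPrimitiveRoot ω R) {z : ℂ} (hz : ‖z‖ ≤ 1) :
    ‖g ((p : ℂ) ^ 3 * z) - ∑ j ∈ range R, LagR R ω j z * g ((p : ℂ) ^ 3 * ω ^ j)‖
      ≤ 2 * M * p ^ R * (1 - p)⁻¹ := by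
  obtain ⟨b, hb, hs⟩ := taylor_bound hp0 hp1 hg hM
  have hω1 : ‖ω‖ = 1 := hω.norm'_eq_one hR.ne'
  have s1 := hs z hz
  have s2 : HasSum (fun n => ∑ j ∈ range R, LagR R ω j z * (b n * (ω ^ j) ^ n))
      (∑ j ∈ range R, LagR R ω j z * g ((p : ℂ) ^ 3 * ω ^ j)) :=
    hasSum_sum fun j _ => (hs (ω ^ j) (by rw [norm_pow, hω1, one_pow])).mul_left _
  have s3 := s1.sub s2
  have geo := (hasSum_geometric_of_lt_one hp0.le hp1).mul_left (2 * M * p ^ R)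
  refine s3.norm_le_of_bounded geo fun n => ?_
  have e : ∑ j ∈ range R, LagR R ω j z * (b n * (ω ^ j) ^ n) = b n * z ^ (n % R) := by
    rw [← LagR_fold hR hω n z, Finset.mul_sum]
    exact Finset.sum_congr rfl fun j _ => by ring
  rw [e, ← mul_sub]
  by_cases hn : n < R
  · rw [Nat.mod_eq_of_lt hn]
    simp only [sub_self, mul_zero, norm_zero]
    positivity
  · push Not at hn
    rw [norm_mul]
    have h2 : ‖z ^ n - z ^ (n % R)‖ ≤ 2 := by
      refine (norm_sub_le _ _).trans ?_
      rw [norm_pow, norm_pow]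
      have a1 := pow_le_one₀ (n := n) (norm_nonneg z) hz
      have a2 := pow_le_one₀ (n := n % R) (norm_nonneg z) hz
      linarith
    have h3 : p ^ n ≤ p ^ R := pow_le_pow_of_le_one hp0.le hp1.le hn
    calc ‖b n‖ * ‖z ^ n - z ^ (n % R)‖ ≤ (M * (p ^ 2) ^ n) * 2 := by
          gcongr
          exact hb n
      _ = 2 * M * p ^ n * p ^ n := by rw [← pow_mul, mul_comm 2 n, pow_mul]; ring
      _ ≤ 2 * M * p ^ R * p ^ n := by gcongr

lemma sum4_comm (s : Finset ℕ) (f : ℕ → ℕ → ℕ → ℕ → ℂ) :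
    ∑ a ∈ s, ∑ b ∈ s, ∑ j ∈ s, ∑ l ∈ s, f a b j l
      = ∑ j ∈ s, ∑ l ∈ s, ∑ b ∈ s, ∑ a ∈ s, f a b j l := by
  calc _ = ∑ a ∈ s, ∑ j ∈ s, ∑ b ∈ s, ∑ l ∈ s, f a b j l :=
        Finset.sum_congr rfl fun a _ => Finset.sum_comm
    _ = ∑ j ∈ s, ∑ a ∈ s, ∑ b ∈ s, ∑ l ∈ s, f a b j l := Finset.sum_comm
    _ = _ := Finset.sum_congr rfl fun j _ => by
      calc _ = ∑ a ∈ s, ∑ l ∈ s, ∑ b ∈ s, f a b j l :=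
            Finset.sum_congr rfl fun a _ => Finset.sum_comm
        _ = ∑ l ∈ s, ∑ a ∈ s, ∑ b ∈ s, f a b j l := Finset.sum_comm
        _ = _ := Finset.sum_congr rfl fun l _ => Finset.sum_comm

lemma interp_two {f : ℂ × ℂ → ℂ} {M p : ℝ} (hp0 : 0 < p) (hp1 : p < 1) (hM0 : 0 ≤ M)
    (hf : DifferentiableOn ℂ f Bidisk) (hM : ∀ z ∈ Bidisk, ‖f z‖ ≤ M) :
    ∃ c : ℕ → ℕ → ℕ → ℂ, ∀ ε : ℝ, 0 < ε → ∀ᶠ R in Filter.atTop, ∀ z w : ℂ, ‖z‖ ≤ 1 → ‖w‖ ≤ 1 →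
      ‖f ((p : ℂ) ^ 3 * z, (p : ℂ) ^ 3 * w) - evP R (c R) z w‖ ≤ ε := by
  have hsmall : ∀ z : ℂ, ‖z‖ ≤ 1 → ‖(p : ℂ) ^ 3 * z‖ < 1 := by
    intro z hz
    rw [norm_mul, norm_pow, Complex.norm_real, Real.norm_of_nonneg hp0.le]
    have : p ^ 3 < 1 := pow_lt_one₀ hp0.le hp1 (by norm_num)
    nlinarith [norm_nonneg z, pow_pos hp0 3]
  let ω : ℕ → ℂ := fun R => Complex.exp (2 * Real.pi * Complex.I / R)
  let F : ℕ → ℕ → ℕ → ℂ := fun R j l => f ((p : ℂ) ^ 3 * ω R ^ j, (p : ℂ) ^ 3 * ω R ^ l)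
  refine ⟨fun R a b => ∑ j ∈ range R, ∑ l ∈ range R,
    ((R : ℂ)⁻¹ * ((ω R)⁻¹ ^ j) ^ a) * ((R : ℂ)⁻¹ * ((ω R)⁻¹ ^ l) ^ b) * F R j l, ?_⟩
  have key : ∀ R : ℕ, 0 < R → ∀ z w : ℂ, ‖z‖ ≤ 1 → ‖w‖ ≤ 1 →
      ‖f ((p : ℂ) ^ 3 * z, (p : ℂ) ^ 3 * w) - ∑ j ∈ range R, LagR R (ω R) j z *
        ∑ l ∈ range R, LagR R (ω R) l w * F R j l‖
        ≤ (1 + R) * (2 * M * p ^ R * (1 - p)⁻¹) := by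
    intro R hR z w hz hw
    have hω : IsPrimitiveRoot (ω R) R := Complex.isPrimitiveRoot_exp R hR.ne'
    have hω1 : ‖ω R‖ = 1 := hω.norm'_eq_one hR.ne'
    have e1 := interp_one (g := fun z => f (z, (p : ℂ) ^ 3 * w)) hp0 hp1 hM0
      (hf.comp (by fun_prop) fun z hz => ⟨by simpa using hz, hsmall w hw⟩)
      (fun z hz => hM _ ⟨by simpa using hz, hsmall w hw⟩) hR hω hz
    have hj : ∀ j, ‖ω R ^ j‖ ≤ 1 := fun j => by rw [norm_pow, hω1, one_pow]
    have e2 := fun j => interp_one (g := fun w => f ((p : ℂ) ^ 3 * ω R ^ j, w)) hp0 hp1 hM0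
      (hf.comp (by fun_prop) fun z hz => ⟨hsmall _ (hj j), by simpa using hz⟩)
      (fun z hz => hM _ ⟨hsmall _ (hj j), by simpa using hz⟩) hR hω hw
    set ε := 2 * M * p ^ R * (1 - p)⁻¹
    have e3 : ‖∑ j ∈ range R, LagR R (ω R) j z * f ((p : ℂ) ^ 3 * ω R ^ j, (p : ℂ) ^ 3 * w)
        - ∑ j ∈ range R, LagR R (ω R) j z * ∑ l ∈ range R, LagR R (ω R) l w * F R j l‖
        ≤ R * ε := by
      rw [← Finset.sum_sub_distrib]
      refine (norm_sum_le _ _).trans ?_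
      calc _ ≤ ∑ j ∈ range R, ε := by
            refine Finset.sum_le_sum fun j _ => ?_
            rw [← mul_sub, norm_mul]
            have := mul_le_mul (LagR_norm_le hR hω1 j hz) (e2 j) (norm_nonneg _) zero_le_one
            simpa using this
        _ = R * ε := by simp
    calc _ = ‖_‖ := by rw [← sub_add_sub_cancel]
      _ ≤ _ := norm_add_le _ _
      _ ≤ ε + R * ε := add_le_add e1 e3
      _ = _ := by ring
  have lim : Filter.Tendsto (fun R : ℕ => (1 + (R : ℝ)) * (2 * M * p ^ R * (1 - p)⁻¹))
      Filter.atTop (nhds 0) := by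
    have l1 := tendsto_pow_atTop_nhds_zero_of_lt_one hp0.le hp1
    have l2 := tendsto_self_mul_const_pow_of_lt_one hp0.le hp1
    have := (l1.add l2).mul_const (2 * M * (1 - p)⁻¹)
    simp only [add_zero, zero_mul] at this
    refine this.congr fun R => ?_
    ring
  intro ε hε
  filter_upwards [lim.eventually (ge_mem_nhds hε), Filter.eventually_gt_atTop 0] with R h1 h2 z w hz hw
  refine le_trans (le_of_eq ?_) ((key R h2 z w hz hw).trans h1)
  congr 2
  simp only [evP, LagR, Finset.mul_sum, Finset.sum_mul]
  rw [sum4_comm]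
  refine Finset.sum_congr rfl fun j _ => Finset.sum_congr rfl fun l _ =>
    Finset.sum_congr rfl fun b _ => Finset.sum_congr rfl fun a _ => ?_
  ring

lemma psdk_pull {k : ℂ × ℂ → ℂ × ℂ → ℂ} (h : IsPSDKernel k) {n : ℕ} {mu : Fin n → ℂ × ℂ}
    (hmu : ∀ i, mu i ∈ Bidisk) : PSDk (fun i j => k (mu i) (mu j)) :=
  fun m nu b => h m (mu ∘ nu) (fun i => hmu (nu i)) b

lemma QF_coe {n : ℕ} {k : Fin n → Fin n → ℂ} (h : PSDk k) (a : Fin n → ℂ) :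
    ∑ i, ∑ j, a i * starRingEnd ℂ (a j) * k i j = (QF k a : ℂ) := by
  have := (Complex.le_def.mp (h n id a)).2
  apply Complex.ext
  · simp [QF]
  · simpa using this.symm

lemma easy_step {N n : ℕ} {ψ : Fin N → ℂ × ℂ → ℂ} {D : ℝ} (hD : 0 < D)
    (hψ : ∀ i, DifferentiableOn ℂ (ψ i) Bidisk)
    (hb : ∀ z ∈ Bidisk, ∑ i, ‖ψ i z‖ ^ 2 ≤ D)
    {k : Fin n → Fin n → ℂ} {mu : Fin n → ℂ × ℂ} (hmu : ∀ i, mu i ∈ Bidisk)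
    (hk : PSDk k)
    (h1 : PSDk (fun i j => (1 - (mu i).1 * starRingEnd ℂ (mu j).1) * k i j))
    (h2 : PSDk (fun i j => (1 - (mu i).2 * starRingEnd ℂ (mu j).2) * k i j))
    (x : Fin N → Fin n → ℂ) {p : ℝ} (hp0 : 0 < p) (hp1 : p < 1) :
    QF k (fun j => ∑ i, ψ i ((p : ℂ) ^ 3 * (mu j).1, (p : ℂ) ^ 3 * (mu j).2) * x i j)
      ≤ D * ∑ i, QF k (x i) := by
  have hsmall : ∀ z : ℂ, ‖z‖ ≤ 1 → ‖(p : ℂ) ^ 3 * z‖ < 1 := by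
    intro z hz
    rw [norm_mul, norm_pow, Complex.norm_real, Real.norm_of_nonneg hp0.le]
    have : p ^ 3 < 1 := pow_lt_one₀ hp0.le hp1 (by norm_num)
    nlinarith [norm_nonneg z, pow_pos hp0 3]
  obtain ⟨M, hM0, hM2⟩ : ∃ M : ℝ, 0 ≤ M ∧ M ^ 2 = D := ⟨√D, Real.sqrt_nonneg _, Real.sq_sqrt hD.le⟩
  have hM : ∀ i, ∀ z ∈ Bidisk, ‖ψ i z‖ ≤ M := by
    intro i z hz
    have : ‖ψ i z‖ ^ 2 ≤ D :=
      (Finset.single_le_sum (f := fun i => ‖ψ i z‖ ^ 2) (fun i _ => by positivity)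
        (mem_univ i)).trans (hb z hz)
    rw [← hM2] at this
    exact (sq_le_sq₀ (norm_nonneg _) hM0).mp this
  choose c hc using fun i => interp_two hp0 hp1 hM0 (hψ i) (hM i)
  have step : ∀ ε : ℝ, 0 < ε → ε ≤ 1 →
      QF k (fun j => ∑ i, ψ i ((p : ℂ) ^ 3 * (mu j).1, (p : ℂ) ^ 3 * (mu j).2) * x i j)
      ≤ (D + ε * (N * (2 * M + 1))) * ∑ i, QF k (x i) := by
    intro ε hε hε1
    have lim : Filter.Tendsto (fun R : ℕ => QF k (fun j => ∑ i, evP R (c i R) (mu j).1 (mu j).2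
        * x i j)) Filter.atTop (nhds (QF k (fun j => ∑ i,
          ψ i ((p : ℂ) ^ 3 * (mu j).1, (p : ℂ) ^ 3 * (mu j).2) * x i j))) := by
      refine ((QF_continuous k).tendsto _).comp ?_
      rw [tendsto_pi_nhds]
      intro j
      refine tendsto_finsetSum _ fun i _ => Filter.Tendsto.mul_const _ ?_
      rw [Metric.tendsto_nhds]
      intro η hη
      filter_upwards [hc i (η / 2) (by positivity)] with R hR
      rw [dist_comm, dist_eq_norm]
      exact (hR _ _ (hmu j).1.le (hmu j).2.le).trans_lt (by linarith)
    refine le_of_tendsto lim ?_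
    filter_upwards [Filter.eventually_all.mpr fun i => hc i ε hε] with R hR
    refine ando_ineq (fun j => (hmu j).1) (fun j => (hmu j).2) hk h1 h2 R (fun i => c i R)
      _ (by positivity) ?_ x
    intro s t hs ht
    have hmem : ((p : ℂ) ^ 3 * s, (p : ℂ) ^ 3 * t) ∈ Bidisk := ⟨hsmall s hs.le, hsmall t ht.le⟩
    calc ∑ i, ‖evP R (c i R) s t‖ ^ 2
        ≤ ∑ i, (‖ψ i ((p : ℂ) ^ 3 * s, (p : ℂ) ^ 3 * t)‖ ^ 2 + ε * (2 * M + 1)) := by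
          refine Finset.sum_le_sum fun i _ => ?_
          have a1 := hR i s t hs.le ht.le
          have a2 := hM i _ hmem
          rw [norm_sub_rev] at a1
          have a3 := norm_sub_norm_le (evP R (c i R) s t) (ψ i ((p : ℂ) ^ 3 * s, (p : ℂ) ^ 3 * t))
          set u := ‖evP R (c i R) s t‖
          set v := ‖ψ i ((p : ℂ) ^ 3 * s, (p : ℂ) ^ 3 * t)‖
          have hu : 0 ≤ u := norm_nonneg _
          have hv : 0 ≤ v := norm_nonneg _
          have : u ≤ v + ε := by linarith
          nlinarith
      _ ≤ D + ε * (N * (2 * M + 1)) := by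
          rw [Finset.sum_add_distrib]
          refine add_le_add (hb _ hmem) (le_of_eq ?_)
          simp; ring
  have lim2 : Filter.Tendsto (fun ε : ℝ => (D + ε * (N * (2 * M + 1))) * ∑ i, QF k (x i))
      (nhdsWithin 0 (Set.Ioi 0)) (nhds ((D + 0 * (N * (2 * M + 1))) * ∑ i, QF k (x i))) := by
    refine Filter.Tendsto.mono_left ?_ nhdsWithin_le_nhds
    exact Continuous.tendsto (by fun_prop) 0
  rw [zero_mul, add_zero] at lim2
  refine ge_of_tendsto lim2 ?_
  filter_upwards [Ioc_mem_nhdsGT (zero_lt_one (α := ℝ))] with ε hε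
  exact step ε hε.1 hε.2

lemma bidisk_isOpen : IsOpen Bidisk := by
  have h1 : IsOpen {lam : ℂ × ℂ | ‖lam.1‖ < 1} := isOpen_lt (by fun_prop) (by fun_prop)
  have h2 : IsOpen {lam : ℂ × ℂ | ‖lam.2‖ < 1} := isOpen_lt (by fun_prop) (by fun_prop)
  exact h1.inter h2

lemma corona_easy {N : ℕ} (φ ψ : Fin N → ℂ × ℂ → ℂ) (δ : ℝ) (hδ : 0 < δ)
    (hψ : ∀ i, DifferentiableOn ℂ (ψ i) Bidisk)
    (h1 : ∀ z ∈ Bidisk, ∑ i, ψ i z * φ i z = 1)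
    (hb : ∀ z ∈ Bidisk, ∑ i, ‖ψ i z‖ ^ 2 ≤ 1 / δ)
    (k : ℂ × ℂ → ℂ × ℂ → ℂ) (hk : IsAdmissibleKernel k) :
    IsPSDKernel (fun zeta lam =>
        ((∑ i, φ i zeta * starRingEnd ℂ (φ i lam)) - (δ : ℂ)) * k zeta lam) := by
  intro n mu hmu a
  have k0 := psdk_pull hk.1 hmu
  have k1 := psdk_pull hk.2.1 hmu
  have k2 := psdk_pull hk.2.2 hmu
  set K : Fin n → Fin n → ℂ := fun i j => k (mu i) (mu j) with hK
  let x : Fin N → Fin n → ℂ := fun i j => φ i (mu j) * a j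
  have st := fun (p : ℝ) (hp0 : 0 < p) (hp1 : p < 1) =>
    easy_step (D := 1 / δ) (by positivity) hψ hb hmu k0 k1 k2 x hp0 hp1
  have lim : Filter.Tendsto (fun p : ℝ => QF K (fun j => ∑ i, ψ i ((p : ℂ) ^ 3 * (mu j).1,
      (p : ℂ) ^ 3 * (mu j).2) * x i j)) (nhdsWithin 1 (Set.Iio 1))
      (nhds (QF K (fun j => ∑ i, ψ i (mu j) * x i j))) := by
    refine Filter.Tendsto.mono_left ?_ nhdsWithin_le_nhds
    refine ((QF_continuous K).tendsto _).comp ?_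
    rw [tendsto_pi_nhds]
    intro j
    refine tendsto_finsetSum _ fun i _ => Filter.Tendsto.mul_const _ ?_
    have hc : ContinuousAt (ψ i) (mu j) :=
      ((hψ i).differentiableAt (bidisk_isOpen.mem_nhds (hmu j))).continuousAt
    refine hc.tendsto.comp ?_
    have : Continuous (fun p : ℝ => (((p : ℂ) ^ 3 * (mu j).1, (p : ℂ) ^ 3 * (mu j).2) : ℂ × ℂ)) := by
      fun_prop
    have := this.tendsto 1
    simpa using this
  have fin : QF K (fun j => ∑ i, ψ i (mu j) * x i j) ≤ 1 / δ * ∑ i, QF K (x i) := by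
    refine le_of_tendsto lim ?_
    filter_upwards [Ioo_mem_nhdsLT (zero_lt_one (α := ℝ))] with p hp
    exact st p hp.1 hp.2
  have e : (fun j => ∑ i, ψ i (mu j) * x i j) = a := by
    funext j
    simp only [x, ← mul_assoc, ← Finset.sum_mul]
    rw [h1 _ (hmu j), one_mul]
  rw [e] at fin
  have tot : ∑ i, ∑ j, a i * starRingEnd ℂ (a j) *
      (((∑ l, φ l (mu i) * starRingEnd ℂ (φ l (mu j))) - (δ : ℂ)) * k (mu i) (mu j))
      = ((∑ l, QF K (x l) - δ * QF K a : ℝ) : ℂ) := by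
    push_cast
    simp only [← QF_coe k0]
    have sw : ∑ l, ∑ i, ∑ j, x l i * starRingEnd ℂ (x l j) * K i j
        = ∑ i, ∑ l, ∑ j, x l i * starRingEnd ℂ (x l j) * K i j := Finset.sum_comm
    rw [sw, Finset.mul_sum, ← Finset.sum_sub_distrib]
    refine Finset.sum_congr rfl fun i _ => ?_
    rw [Finset.sum_comm, Finset.mul_sum, ← Finset.sum_sub_distrib]
    refine Finset.sum_congr rfl fun j _ => ?_
    have : ∀ l, x l i * starRingEnd ℂ (x l j) * K i j
        = (φ l (mu i) * starRingEnd ℂ (φ l (mu j))) * (a i * starRingEnd ℂ (a j) * K i j) := by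
      intro l; simp only [x, map_mul]; ring
    rw [Finset.sum_congr rfl fun l _ => this l, ← Finset.sum_mul]
    simp only [hK]
    ring
  simp only
  rw [tot]
  have : 0 ≤ ∑ l, QF K (x l) - δ * QF K a := by
    have : δ * QF K a ≤ δ * (1 / δ * ∑ i, QF K (x i)) := by gcongr
    rw [← mul_assoc, mul_one_div_cancel hδ.ne', one_mul] at this
    linarith
  exact_mod_cast this

lemma push_psd {X Y : Type*} [Fintype Y] [DecidableEq X] {κ : Y → Y → ℂ}
    (h : ∀ α : Y → ℂ, 0 ≤ ∑ p, ∑ q, α p * starRingEnd ℂ (α q) * κ p q) (e : Y → X) :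
    PSDk (fun x x' => ∑ p, ∑ q, (if x = e p then (1 : ℂ) else 0) * (if x' = e q then (1 : ℂ) else 0)
      * κ p q) := by
  intro n mu a
  refine (h (fun p => ∑ i, a i * (if mu i = e p then (1 : ℂ) else 0))).trans_eq ?_
  have c1 : ∀ q, starRingEnd ℂ (∑ j, a j * (if mu j = e q then (1 : ℂ) else 0))
      = ∑ j, starRingEnd ℂ (a j) * (if mu j = e q then (1 : ℂ) else 0) := by
    intro q
    rw [map_sum]
    refine Finset.sum_congr rfl fun j _ => ?_
    split_ifs <;> simp
  simp only [c1]
  calc _ = ∑ p, ∑ q, ∑ i, ∑ j, (a i * (if mu i = e p then (1 : ℂ) else 0)) *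
        (starRingEnd ℂ (a j) * (if mu j = e q then (1 : ℂ) else 0)) * κ p q := by
        refine Finset.sum_congr rfl fun p _ => Finset.sum_congr rfl fun q _ => ?_
        rw [Finset.sum_mul_sum, Finset.sum_mul]
        refine Finset.sum_congr rfl fun i _ => ?_
        rw [Finset.sum_mul]
    _ = ∑ p, ∑ i, ∑ q, ∑ j, (a i * (if mu i = e p then (1 : ℂ) else 0)) *
        (starRingEnd ℂ (a j) * (if mu j = e q then (1 : ℂ) else 0)) * κ p q :=
        Finset.sum_congr rfl fun p _ => Finset.sum_comm
    _ = ∑ i, ∑ p, ∑ q, ∑ j, (a i * (if mu i = e p then (1 : ℂ) else 0)) *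
        (starRingEnd ℂ (a j) * (if mu j = e q then (1 : ℂ) else 0)) * κ p q := Finset.sum_comm
    _ = ∑ i, ∑ p, ∑ j, ∑ q, (a i * (if mu i = e p then (1 : ℂ) else 0)) *
        (starRingEnd ℂ (a j) * (if mu j = e q then (1 : ℂ) else 0)) * κ p q :=
        Finset.sum_congr rfl fun i _ => Finset.sum_congr rfl fun p _ => Finset.sum_comm
    _ = ∑ i, ∑ j, ∑ p, ∑ q, (a i * (if mu i = e p then (1 : ℂ) else 0)) *
        (starRingEnd ℂ (a j) * (if mu j = e q then (1 : ℂ) else 0)) * κ p q :=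
        Finset.sum_congr rfl fun i _ => Finset.sum_comm
    _ = _ := by
        refine Finset.sum_congr rfl fun i _ => Finset.sum_congr rfl fun j _ => ?_
        rw [Finset.mul_sum]
        refine Finset.sum_congr rfl fun p _ => ?_
        rw [Finset.mul_sum]
        refine Finset.sum_congr rfl fun q _ => ?_
        ring

lemma push_apply {X Y : Type*} [Fintype Y] [DecidableEq X] (κ : Y → Y → ℂ) {e : Y → X}
    (he : Function.Injective e) (p q : Y) :
    (∑ p', ∑ q', (if e p = e p' then (1 : ℂ) else 0) * (if e q = e q' then (1 : ℂ) else 0)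
      * κ p' q') = κ p q := by
  classical
  simp [he.eq_iff]

lemma psdk_of_fintype {Y : Type*} [Fintype Y] {κ : Y → Y → ℂ}
    (h : ∀ α : Y → ℂ, 0 ≤ ∑ p, ∑ q, α p * starRingEnd ℂ (α q) * κ p q) : PSDk κ := by
  classical
  have := push_psd h id
  intro n mu a
  have h2 := this n mu a
  simpa using h2

lemma PSDk.fintype {Y : Type*} [Fintype Y] {κ : Y → Y → ℂ} (h : PSDk κ) (α : Y → ℂ) :
    0 ≤ ∑ p, ∑ q, α p * starRingEnd ℂ (α q) * κ p q := by
  let e := (Fintype.equivFin Y).symm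
  have := h _ e (α ∘ e)
  rw [← Equiv.sum_comp e]
  refine this.trans_eq (Finset.sum_congr rfl fun i _ => ?_)
  rw [← Equiv.sum_comp e]
  rfl

lemma PSDk.add {X : Type*} {k l : X → X → ℂ} (hk : PSDk k) (hl : PSDk l) :
    PSDk (fun x y => k x y + l x y) := by
  intro n mu a
  refine (add_nonneg (hk n mu a) (hl n mu a)).trans_eq ?_
  simp only [← Finset.sum_add_distrib, ← mul_add]

lemma PSDk.smul {X : Type*} {k : X → X → ℂ} (hk : PSDk k) {t : ℝ} (ht : 0 ≤ t) :
    PSDk (fun x y => (t : ℂ) * k x y) := by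
  intro n mu a
  have ht' : (0 : ℂ) ≤ (t : ℂ) := by exact_mod_cast ht
  refine (mul_nonneg ht' (hk n mu a)).trans_eq ?_
  simp only [Finset.mul_sum]
  refine Finset.sum_congr rfl fun i _ => Finset.sum_congr rfl fun j _ => ?_
  ring

lemma PSDk.zero {X : Type*} : PSDk (fun _ _ : X => (0 : ℂ)) := by
  intro n mu a
  simp

lemma PSDk.rankOne {X : Type*} (α : X → ℂ) : PSDk (fun x y => α x * starRingEnd ℂ (α y)) := by
  intro n mu a
  have : ∑ i, ∑ j, a i * starRingEnd ℂ (a j) * (α (mu i) * starRingEnd ℂ (α (mu j)))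
      = (∑ i, a i * α (mu i)) * starRingEnd ℂ (∑ i, a i * α (mu i)) := by
    rw [map_sum, Finset.sum_mul_sum]
    refine Finset.sum_congr rfl fun i _ => Finset.sum_congr rfl fun j _ => ?_
    simp only [map_mul]; ring
  rw [this, Complex.mul_conj]
  exact_mod_cast Complex.normSq_nonneg _

lemma herm_sum_im {Y : Type*} [Fintype Y] {A B : Y → Y → ℂ}
    (hA : ∀ p q, starRingEnd ℂ (A p q) = A q p) (hB : ∀ p q, starRingEnd ℂ (B p q) = B q p) :
    (∑ p, ∑ q, A p q * B p q).im = 0 := by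
  rw [← Complex.conj_eq_iff_im, map_sum]
  simp only [map_sum, map_mul, hA, hB]
  exact Finset.sum_comm

lemma finite_stage {Y : Type*} [Fintype Y] (z w : Y → ℂ) (M0 : Y → Y → ℂ)
    (hM0 : ∀ p q, starRingEnd ℂ (M0 p q) = M0 q p)
    (H : ∀ κ : Y → Y → ℂ, PSDk κ → PSDk (fun p q => (1 - z p * starRingEnd ℂ (z q)) * κ p q) →
      PSDk (fun p q => (1 - w p * starRingEnd ℂ (w q)) * κ p q) → PSDk (fun p q => M0 p q * κ p q))
    (ε : ℝ) (hε : 0 < ε) :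
    ∃ G D T : Y → Y → ℂ, PSDk G ∧ PSDk D ∧ PSDk T ∧ ∀ p q,
      ‖M0 p q - ((1 - z p * starRingEnd ℂ (z q)) * G p q + (1 - w p * starRingEnd ℂ (w q)) * D p q
        + T p q)‖ ≤ ε := by
  classical
  let Tr : (Y → Y → ℂ) → (Y → Y → ℂ) → (Y → Y → ℂ) → (Y → Y → ℂ) := fun G D T p q =>
    (1 - z p * starRingEnd ℂ (z q)) * G p q + (1 - w p * starRingEnd ℂ (w q)) * D p q + T p q
  let C : Set (Y → Y → ℂ) := {A | ∃ G D T, PSDk G ∧ PSDk D ∧ PSDk T ∧ A = Tr G D T}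
  have hadd : ∀ A ∈ C, ∀ B ∈ C, A + B ∈ C := by
    rintro A ⟨G, D, T, hG, hD, hT, rfl⟩ B ⟨G', D', T', hG', hD', hT', rfl⟩
    refine ⟨_, _, _, hG.add hG', hD.add hD', hT.add hT', ?_⟩
    funext p q
    simp only [Tr, Pi.add_apply]; ring
  have hsmul : ∀ A ∈ C, ∀ t : ℝ, 0 ≤ t → t • A ∈ C := by
    rintro A ⟨G, D, T, hG, hD, hT, rfl⟩ t ht
    refine ⟨_, _, _, hG.smul ht, hD.smul ht, hT.smul ht, ?_⟩
    funext p q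
    simp only [Tr, Pi.smul_apply, Complex.real_smul]; ring
  have hconv : Convex ℝ C := by
    intro A hA B hB s t hs ht _
    exact hadd _ (hsmul _ hA s hs) _ (hsmul _ hB t ht)
  have hcl : M0 ∈ closure C := by
    by_contra hn
    obtain ⟨f, u, hf1, hf2⟩ := geometric_hahn_banach_point_closed hconv.closure isClosed_closure hn
    have h0C : (0 : Y → Y → ℂ) ∈ C :=
      ⟨_, _, _, PSDk.zero, PSDk.zero, PSDk.zero, by funext p q; simp [Tr]⟩
    have hu : u < 0 := by simpa using hf2 0 (subset_closure h0C)
    have hfC : ∀ A ∈ C, 0 ≤ f A := by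
      intro A hA
      by_contra hneg
      push Not at hneg
      have := hf2 _ (subset_closure (hsmul A hA (u / f A) (div_nonneg_of_nonpos hu.le hneg.le)))
      rw [map_smul, smul_eq_mul, div_mul_cancel₀ _ hneg.ne] at this
      exact lt_irrefl _ this
    let E : Y → Y → ℂ → (Y → Y → ℂ) := fun p q c => Pi.single p (Pi.single q c)
    let κ' : Y → Y → ℂ := fun p q => (f (E p q 1) : ℂ) - Complex.I * (f (E p q Complex.I) : ℂ)
    have frep : ∀ A, f A = (∑ p, ∑ q, A p q * κ' p q).re := by
      intro A
      have hA : A = ∑ p, ∑ q, ((A p q).re • E p q 1 + (A p q).im • E p q Complex.I) := by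
        funext p' q'
        simp only [Finset.sum_apply, Pi.add_apply, Pi.smul_apply, E]
        rw [Finset.sum_eq_single p', Finset.sum_eq_single q']
        · simp only [Pi.single_eq_same, Complex.real_smul, mul_one]
          exact (Complex.re_add_im _).symm
        · intro b _ hb
          simp [hb.symm]
        · simp
        · intro b _ hb
          simp [hb.symm]
        · simp
      conv_lhs => rw [hA]
      simp only [map_sum, map_add, map_smul, smul_eq_mul, Complex.re_sum]
      refine Finset.sum_congr rfl fun p _ => Finset.sum_congr rfl fun q _ => ?_
      simp [κ', Complex.mul_re]
    let κ : Y → Y → ℂ := fun p q => (κ' p q + starRingEnd ℂ (κ' q p)) / 2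
    have hκ : ∀ p q, starRingEnd ℂ (κ p q) = κ q p := by
      intro p q
      simp only [κ, map_div₀, map_add, Complex.conj_conj]
      rw [add_comm]
      congr 1
      exact map_ofNat _ 2
    have frep2 : ∀ A : Y → Y → ℂ, (∀ p q, starRingEnd ℂ (A p q) = A q p) →
        ∑ p, ∑ q, A p q * κ p q = (f A : ℂ) := by
      intro A hA
      apply Complex.ext
      · have e1 := frep A
        have e2 : f A = (∑ p, ∑ q, A p q * starRingEnd ℂ (κ' q p)).re := by
          rw [frep A, ← Complex.conj_re, map_sum]
          simp only [map_sum, map_mul, hA]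
          rw [Finset.sum_comm]
        have e3 : ∑ p, ∑ q, A p q * κ p q = (∑ p, ∑ q, A p q * κ' p q
            + ∑ p, ∑ q, A p q * starRingEnd ℂ (κ' q p)) / 2 := by
          simp only [← Finset.sum_add_distrib, Finset.sum_div]
          refine Finset.sum_congr rfl fun p _ => Finset.sum_congr rfl fun q _ => ?_
          simp only [κ]; ring
        rw [e3]
        have : ∀ c : ℂ, (c / 2).re = c.re / 2 := fun c => by
          rw [← Complex.ofReal_ofNat, Complex.div_ofReal_re]
        rw [this, Complex.add_re, ← e1, ← e2, Complex.ofReal_re]; ring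
      · rw [herm_sum_im hA hκ]; simp
    have hz : ∀ (x : Y → ℂ), ∀ p q, starRingEnd ℂ (1 - x p * starRingEnd ℂ (x q))
        = 1 - x q * starRingEnd ℂ (x p) := by
      intro x p q; simp [mul_comm]
    have gen : ∀ α : Y → ℂ, ∀ A : Y → Y → ℂ, (∀ p q, starRingEnd ℂ (A p q) = A q p) →
        (fun p q => A p q * (α p * starRingEnd ℂ (α q))) ∈ C →
        0 ≤ ∑ p, ∑ q, α p * starRingEnd ℂ (α q) * (A p q * κ p q) := by
      intro α A hA hm
      have h1 := frep2 (fun p q => A p q * (α p * starRingEnd ℂ (α q))) (by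
        intro p q; simp only [map_mul, hA, Complex.conj_conj]; ring)
      have h2 := hfC _ hm
      have h3 : (0 : ℂ) ≤ (f (fun p q => A p q * (α p * starRingEnd ℂ (α q))) : ℂ) := by
        exact_mod_cast h2
      rw [← h1] at h3
      refine h3.trans_eq (Finset.sum_congr rfl fun p _ => Finset.sum_congr rfl fun q _ => ?_)
      ring
    have k0 : PSDk κ := psdk_of_fintype fun α => by
      have := gen α (fun _ _ => 1) (by simp)
        ⟨_, _, _, PSDk.zero, PSDk.zero, PSDk.rankOne α, by funext p q; simp [Tr]⟩
      simpa using this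
    have k1 : PSDk (fun p q => (1 - z p * starRingEnd ℂ (z q)) * κ p q) :=
      psdk_of_fintype fun α => gen α _ (hz z)
        ⟨_, _, _, PSDk.rankOne α, PSDk.zero, PSDk.zero, by funext p q; simp [Tr]⟩
    have k2 : PSDk (fun p q => (1 - w p * starRingEnd ℂ (w q)) * κ p q) :=
      psdk_of_fintype fun α => gen α _ (hz w)
        ⟨_, _, _, PSDk.zero, PSDk.rankOne α, PSDk.zero, by funext p q; simp [Tr]⟩
    have fin := (H κ k0 k1 k2).fintype (fun _ => 1)
    simp only [map_one, mul_one, one_mul] at fin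
    rw [frep2 M0 hM0] at fin
    have : 0 ≤ f M0 := by exact_mod_cast fin
    linarith
  obtain ⟨A, ⟨G, D, T, hG, hD, hT, rfl⟩, hA⟩ := Metric.mem_closure_iff.mp hcl ε hε
  refine ⟨G, D, T, hG, hD, hT, fun p q => ?_⟩
  rw [← dist_eq_norm]
  exact ((dist_le_pi_dist (M0 p) (Tr G D T p) q).trans (dist_le_pi_dist M0 (Tr G D T) p)).trans hA.le

lemma PSDk.norm_le {X : Type*} {k : X → X → ℂ} (h : PSDk k) (x y : X) :
    ‖k x y‖ ≤ (k x x).re + (k y y).re := by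
  have hx := (Complex.le_def.mp (h.diag_nonneg x)).1
  have hy := (Complex.le_def.mp (h.diag_nonneg y)).1
  simp only [Complex.zero_re] at hx hy
  by_cases h0 : k x y = 0
  · rw [h0, norm_zero]; linarith
  have hn : (‖k x y‖ : ℂ) ≠ 0 := by exact_mod_cast norm_ne_zero_iff.mpr h0
  have hs := (Complex.le_def.mp (h 2 ![x, y] ![1, -(k x y / ‖k x y‖)])).1
  have hh := h.herm x y
  have hc : k x y * starRingEnd ℂ (k x y) = (‖k x y‖ : ℂ) ^ 2 := Complex.mul_conj' _
  simp only [Fin.sum_univ_two, Matrix.cons_val_zero, Matrix.cons_val_one, map_one, map_neg,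
    map_div₀, Complex.conj_ofReal, ← hh, Complex.zero_re] at hs
  have e : (1 : ℂ) * 1 * k x x + 1 * -((starRingEnd ℂ) (k x y) / ‖k x y‖) * k x y +
      (-(k x y / ‖k x y‖) * 1 * (starRingEnd ℂ) (k x y) +
        -(k x y / ‖k x y‖) * -((starRingEnd ℂ) (k x y) / ‖k x y‖) * k y y)
      = k x x + k y y - ((2 * ‖k x y‖ : ℝ) : ℂ) := by
    push_cast
    field_simp
    linear_combination (-2 * (‖k x y‖ : ℂ) + k y y) * hc
  rw [e] at hs
  simp only [Complex.sub_re, Complex.add_re, Complex.ofReal_re] at hs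
  have := norm_nonneg (k x y)
  linarith

lemma ultra_limit {S : Type*} (V : Ultrafilter S) (g : S → ℂ) (B : ℝ) (hB : ∀ s, ‖g s‖ ≤ B) :
    ∃ l, Filter.Tendsto g V (nhds l) := by
  have hc : IsCompact (Metric.closedBall (0 : ℂ) B) := isCompact_closedBall _ _
  obtain ⟨l, _, hl⟩ := hc.ultrafilter_le_nhds (V.map g) (by
    rw [Filter.le_principal_iff, Ultrafilter.mem_coe, Ultrafilter.mem_map]
    have : g ⁻¹' Metric.closedBall (0 : ℂ) B = Set.univ := by
      ext s; simpa using hB s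
    rw [this]
    exact Filter.univ_mem)
  exact ⟨l, hl⟩

lemma psdk_limit {X S : Type*} (V : Filter S) [V.NeBot] {K : S → X → X → ℂ} {k : X → X → ℂ}
    (hK : ∀ s, PSDk (K s)) (h : ∀ x y, Filter.Tendsto (fun s => K s x y) V (nhds (k x y))) :
    PSDk k := by
  intro n mu a
  have : Filter.Tendsto (fun s => ∑ i, ∑ j, a i * starRingEnd ℂ (a j) * K s (mu i) (mu j)) V
      (nhds (∑ i, ∑ j, a i * starRingEnd ℂ (a j) * k (mu i) (mu j))) :=
    tendsto_finsetSum _ fun i _ => tendsto_finsetSum _ fun j _ => (h _ _).const_mul _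
  exact ge_of_tendsto' this fun s => hK s n mu a

lemma agler_decomp {X : Type*} (z w : X → ℂ) (hz : ∀ x, ‖z x‖ < 1) (hw : ∀ x, ‖w x‖ < 1)
    (M0 : X → X → ℂ) (hM0 : ∀ p q, starRingEnd ℂ (M0 p q) = M0 q p)
    (H : ∀ (F : Finset X) (κ : F → F → ℂ), PSDk κ →
      PSDk (fun p q : F => (1 - z p * starRingEnd ℂ (z q)) * κ p q) →
      PSDk (fun p q : F => (1 - w p * starRingEnd ℂ (w q)) * κ p q) →
      PSDk (fun p q : F => M0 p q * κ p q)) :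
    ∃ G D T : X → X → ℂ, PSDk G ∧ PSDk D ∧ PSDk T ∧ ∀ p q,
      M0 p q = ((1 - z p * starRingEnd ℂ (z q)) * G p q + (1 - w p * starRingEnd ℂ (w q)) * D p q
        + T p q) := by
  classical
  let B : X → ℝ := fun x => (‖M0 x x‖ + 1) / (1 - ‖z x‖ ^ 2)
  let B' : X → ℝ := fun x => (‖M0 x x‖ + 1) / (1 - ‖w x‖ ^ 2)
  let B'' : X → ℝ := fun x => (‖M0 x x‖ + 1)
  have hzz : ∀ x, 0 < 1 - ‖z x‖ ^ 2 := fun x => by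
    have := hz x; nlinarith [norm_nonneg (z x)]
  have hww : ∀ x, 0 < 1 - ‖w x‖ ^ 2 := fun x => by
    have := hw x; nlinarith [norm_nonneg (w x)]
  have st : ∀ s : Finset X × ℕ, ∃ G D T : X → X → ℂ, PSDk G ∧ PSDk D ∧ PSDk T ∧
      (∀ x, (G x x).re ≤ B x) ∧ (∀ x, (D x x).re ≤ B' x) ∧ (∀ x, (T x x).re ≤ B'' x) ∧
      ∀ p ∈ s.1, ∀ q ∈ s.1,
      ‖M0 p q - ((1 - z p * starRingEnd ℂ (z q)) * G p q + (1 - w p * starRingEnd ℂ (w q)) * D p q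
        + T p q)‖ ≤ 1 / ((s.2 : ℝ) + 1) := by
    rintro ⟨F, m⟩
    obtain ⟨G, D, T, hG, hD, hT, h⟩ := finite_stage (Y := F) (fun p => z p) (fun p => w p)
      (fun p q => M0 p q) (fun p q => hM0 p q) (H F) (1 / ((m : ℝ) + 1)) (by positivity)
    let e : F → X := Subtype.val
    have he : Function.Injective e := Subtype.val_injective
    let P : (F → F → ℂ) → X → X → ℂ := fun κ x x' => ∑ p, ∑ q,
      (if x = e p then (1 : ℂ) else 0) * (if x' = e q then (1 : ℂ) else 0) * κ p q
    have hP : ∀ κ (p q : F), P κ p q = κ p q := fun κ p q => push_apply κ he p q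
    have hP0 : ∀ κ x, x ∉ F → P κ x x = 0 := by
      intro κ x hx
      refine Finset.sum_eq_zero fun p _ => Finset.sum_eq_zero fun q _ => ?_
      rw [if_neg (by rintro rfl; exact hx p.2)]; simp
    have bd : ∀ p : F, (1 - ‖z p‖ ^ 2) * (G p p).re + (1 - ‖w p‖ ^ 2) * (D p p).re + (T p p).re
        ≤ ‖M0 p p‖ + 1 := by
      intro p
      have h1 := h p p
      have h2 : (1 : ℝ) / (m + 1) ≤ 1 := by
        rw [div_le_one (by positivity)]; linarith [(Nat.cast_nonneg m : (0 : ℝ) ≤ m)]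
      have h3 := (Complex.abs_re_le_norm _).trans (h1.trans h2)
      rw [Complex.mul_conj', Complex.mul_conj'] at h3
      have e1 : (1 - (‖z p‖ : ℂ) ^ 2) = ((1 - ‖z p‖ ^ 2 : ℝ) : ℂ) := by push_cast; rfl
      have e2 : (1 - (‖w p‖ : ℂ) ^ 2) = ((1 - ‖w p‖ ^ 2 : ℝ) : ℂ) := by push_cast; rfl
      rw [e1, e2, Complex.sub_re, Complex.add_re, Complex.add_re, Complex.re_ofReal_mul,
        Complex.re_ofReal_mul, abs_le] at h3
      have h4 := Complex.re_le_norm (M0 p p)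
      linarith [h3.1]
    have pos : ∀ {K : F → F → ℂ}, PSDk K → ∀ p, 0 ≤ (K p p).re := fun hK p =>
      (Complex.le_def.mp (hK.diag_nonneg p)).1
    refine ⟨P G, P D, P T, push_psd hG.fintype e, push_psd hD.fintype e, push_psd hT.fintype e,
      ?_, ?_, ?_, ?_⟩
    · intro x
      have hB : 0 ≤ B x := div_nonneg (by positivity) (hzz x).le
      by_cases hx : x ∈ F
      · rw [hP G ⟨x, hx⟩ ⟨x, hx⟩, le_div_iff₀ (hzz x)]
        have := bd ⟨x, hx⟩
        have := mul_nonneg (hww x).le (pos hD ⟨x, hx⟩)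
        have := pos hT ⟨x, hx⟩
        simp only at *
        linarith
      · rw [hP0 G x hx]; simpa using hB
    · intro x
      have hB : 0 ≤ B' x := div_nonneg (by positivity) (hww x).le
      by_cases hx : x ∈ F
      · rw [hP D ⟨x, hx⟩ ⟨x, hx⟩, le_div_iff₀ (hww x)]
        have := bd ⟨x, hx⟩
        have := mul_nonneg (hzz x).le (pos hG ⟨x, hx⟩)
        have := pos hT ⟨x, hx⟩
        simp only at *
        linarith
      · rw [hP0 D x hx]; simpa using hB
    · intro x
      have hB : 0 ≤ B'' x := by positivity
      by_cases hx : x ∈ F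
      · rw [hP T ⟨x, hx⟩ ⟨x, hx⟩]
        have := bd ⟨x, hx⟩
        have := mul_nonneg (hzz x).le (pos hG ⟨x, hx⟩)
        have := mul_nonneg (hww x).le (pos hD ⟨x, hx⟩)
        simp only [B''] at *
        linarith
      · rw [hP0 T x hx]; simpa using hB
    · intro p hp q hq
      rw [hP G ⟨p, hp⟩ ⟨q, hq⟩, hP D ⟨p, hp⟩ ⟨q, hq⟩, hP T ⟨p, hp⟩ ⟨q, hq⟩]
      exact h ⟨p, hp⟩ ⟨q, hq⟩
  choose G D T hG hD hT bG bD bT happ using st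
  let V : Ultrafilter (Finset X × ℕ) := Ultrafilter.of Filter.atTop
  have hV : (V : Filter (Finset X × ℕ)) ≤ Filter.atTop := Ultrafilter.of_le _
  choose G' lG using fun x y => ultra_limit V (fun s => G s x y) (B x + B y)
    (fun s => ((hG s).norm_le x y).trans (add_le_add (bG s x) (bG s y)))
  choose D' lD using fun x y => ultra_limit V (fun s => D s x y) (B' x + B' y)
    (fun s => ((hD s).norm_le x y).trans (add_le_add (bD s x) (bD s y)))
  choose T' lT using fun x y => ultra_limit V (fun s => T s x y) (B'' x + B'' y)
    (fun s => ((hT s).norm_le x y).trans (add_le_add (bT s x) (bT s y)))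
  refine ⟨G', D', T', psdk_limit _ hG lG, psdk_limit _ hD lD, psdk_limit _ hT lT, fun p q => ?_⟩
  have l1 : Filter.Tendsto (fun s => M0 p q - ((1 - z p * starRingEnd ℂ (z q)) * G s p q
      + (1 - w p * starRingEnd ℂ (w q)) * D s p q + T s p q)) V (nhds (M0 p q -
      ((1 - z p * starRingEnd ℂ (z q)) * G' p q
      + (1 - w p * starRingEnd ℂ (w q)) * D' p q + T' p q))) :=
    tendsto_const_nhds.sub ((((lG p q).const_mul _).add ((lD p q).const_mul _)).add (lT p q))
  have l2 : Filter.Tendsto (fun s => M0 p q - ((1 - z p * starRingEnd ℂ (z q)) * G s p q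
      + (1 - w p * starRingEnd ℂ (w q)) * D s p q + T s p q)) V (nhds 0) := by
    have l3 : Filter.Tendsto (fun s : Finset X × ℕ => 1 / ((s.2 : ℝ) + 1)) V (nhds 0) := by
      refine Filter.Tendsto.mono_left ?_ hV
      have : Filter.Tendsto (fun s : Finset X × ℕ => s.2) Filter.atTop Filter.atTop := by
        rw [← Filter.prod_atTop_atTop_eq]; exact Filter.tendsto_snd
      exact tendsto_one_div_add_atTop_nhds_zero_nat.comp this
    refine squeeze_zero_norm' ?_ l3
    apply hV
    filter_upwards [Filter.eventually_ge_atTop (({p, q} : Finset X), 0)] with s hs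
    exact happ s p (hs.1 (by simp)) q (hs.1 (by simp))
  have := tendsto_nhds_unique l1 l2
  exact sub_eq_zero.mp this

lemma kolmogorov {X : Type} {k : X → X → ℂ} (hk : PSDk k) :
    ∃ (H : Type) (_ : NormedAddCommGroup H) (_ : InnerProductSpace ℂ H) (_ : CompleteSpace H)
      (u : X → H), ∀ x y, inner ℂ (u y) (u x) = k x y := by
  let K : Matrix X X (ℂ →L[ℂ] ℂ) := Matrix.of fun x y => k y x • ContinuousLinearMap.id ℂ ℂ
  have hK : ∀ x y (v : ℂ), K x y v = k y x * v := fun x y v => rfl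
  have hps : K.PosSemidef := by
    have tf := (RKHS.posSemidef_tfae (K := K)).out 0 2
    rw [tf]
    constructor
    · ext x y
      rw [Matrix.conjTranspose_apply]
      rw [ContinuousLinearMap.star_eq_adjoint]
      refine ext_inner_right ℂ fun w => ?_
      rw [ContinuousLinearMap.adjoint_inner_left, hK, hK]
      simp only [RCLike.inner_apply, map_mul, hk.herm]
      ring
    · intro vv
      have h := (hk.comp (Subtype.val : vv.support → X)).fintype (fun x => vv x)
      have h2 := (Complex.le_def.mp h).1
      refine h2.trans_eq ?_
      change _ = Complex.re _
      congr 1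
      unfold Finsupp.sum
      simp only [RCLike.inner_apply, map_mul, hk.herm, hK]
      rw [Finset.sum_comm]
      refine Eq.trans ?_ (Finset.sum_coe_sort vv.support _)
      refine Finset.sum_congr rfl fun x _ => ?_
      refine Eq.trans ?_ (Finset.sum_coe_sort vv.support _)
      refine Finset.sum_congr rfl fun y _ => ?_
      ring
  have : Fact K.PosSemidef := ⟨hps⟩
  refine ⟨RKHS.OfKernel K, inferInstance, inferInstance, inferInstance,
    fun x => RKHS.kerFun (RKHS.OfKernel K) x 1, fun x y => ?_⟩
  have := RKHS.kernel_inner (RKHS.OfKernel K) x y (1 : ℂ) (1 : ℂ)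
  rw [RKHS.OfKernel.kernel_ofKernel, hK] at this
  rw [← this]
  simp [RCLike.inner_apply, hk.herm]

lemma contraction_ext {E P Q : Type*} [AddCommGroup E] [Module ℂ E]
    [NormedAddCommGroup P] [InnerProductSpace ℂ P] [CompleteSpace P]
    [NormedAddCommGroup Q] [InnerProductSpace ℂ Q] [CompleteSpace Q]
    (Lx : E →ₗ[ℂ] P) (Ly : E →ₗ[ℂ] Q) (h : ∀ c, ‖Ly c‖ ≤ ‖Lx c‖) :
    ∃ V : P →L[ℂ] Q, (∀ p, ‖V p‖ ≤ ‖p‖) ∧ ∀ c, V (Lx c) = Ly c := by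
  let S : Submodule ℂ P := (LinearMap.range Lx).topologicalClosure
  have hS : IsClosed (S : Set P) := Submodule.isClosed_topologicalClosure _
  have : CompleteSpace S := hS.completeSpace_coe
  have hmem : ∀ c, Lx c ∈ S := fun c =>
    (LinearMap.range Lx).le_topologicalClosure (LinearMap.mem_range_self Lx c)
  let e : E →ₗ[ℂ] S := Lx.codRestrict S hmem
  have hd : DenseRange e := by
    intro s
    rw [Metric.mem_closure_iff]
    intro ε hε
    obtain ⟨b, ⟨c, rfl⟩, hb⟩ := Metric.mem_closure_iff.mp (show (s : P) ∈ closure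
      (LinearMap.range Lx : Set P) from s.2) ε hε
    exact ⟨e c, ⟨c, rfl⟩, hb⟩
  have hn : ∀ c, ‖Ly c‖ ≤ 1 * ‖e c‖ := fun c => by rw [one_mul]; exact h c
  refine ⟨(Ly.extendOfNorm e) ∘L S.orthogonalProjectionOnto, fun p => ?_, fun c => ?_⟩
  · refine (LinearMap.norm_extendOfNorm_apply_le hd 1 hn _).trans ?_
    rw [one_mul]
    exact S.norm_orthogonalProjectionOnto_apply_le p
  · rw [ContinuousLinearMap.comp_apply]
    have : S.orthogonalProjectionOnto (Lx c) = e c :=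
      S.orthogonalProjectionOnto_mem_subspace_eq_self (e c)
    rw [this]
    exact LinearMap.extendOfNorm_eq hd ⟨1, hn⟩ c

lemma transfer {N : ℕ} {H : Type*} [NormedAddCommGroup H] [InnerProductSpace ℂ H] [CompleteSpace H]
    (V : WithLp 2 (EuclideanSpace ℂ (Fin N) × H) →L[ℂ] WithLp 2 (ℂ × H))
    (hV : ∀ p, ‖V p‖ ≤ ‖p‖) (P1 P2 : H →L[ℂ] H)
    (hP : ∀ (z w : ℂ) (h : H), ‖z • P1 h + w • P2 h‖ ≤ max ‖z‖ ‖w‖ * ‖h‖) :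
    ∃ g : Fin N → ℂ × ℂ → ℂ, (∀ i, DifferentiableOn ℂ (g i) Bidisk) ∧
      (∀ l ∈ Bidisk, ∀ (ξ : EuclideanSpace ℂ (Fin N)) (h : H) (c : ℂ),
        V (WithLp.toLp 2 (ξ, l.1 • P1 h + l.2 • P2 h)) = WithLp.toLp 2 (c, h) →
        ∑ i, g i l * ξ i = c) ∧ ∀ l ∈ Bidisk, ∑ i, ‖g i l‖ ^ 2 ≤ 1 := by
  let i1 : EuclideanSpace ℂ (Fin N) →L[ℂ] WithLp 2 (EuclideanSpace ℂ (Fin N) × H) :=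
    (WithLp.prodContinuousLinearEquiv 2 ℂ (EuclideanSpace ℂ (Fin N)) H).symm.toContinuousLinearMap
      ∘L ContinuousLinearMap.inl ℂ _ _
  let i2 : H →L[ℂ] WithLp 2 (EuclideanSpace ℂ (Fin N) × H) :=
    (WithLp.prodContinuousLinearEquiv 2 ℂ (EuclideanSpace ℂ (Fin N)) H).symm.toContinuousLinearMap
      ∘L ContinuousLinearMap.inr ℂ _ _
  let p1 : WithLp 2 (ℂ × H) →L[ℂ] ℂ := ContinuousLinearMap.fst ℂ _ _ ∘L
    (WithLp.prodContinuousLinearEquiv 2 ℂ ℂ H).toContinuousLinearMap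
  let p2 : WithLp 2 (ℂ × H) →L[ℂ] H := ContinuousLinearMap.snd ℂ _ _ ∘L
    (WithLp.prodContinuousLinearEquiv 2 ℂ ℂ H).toContinuousLinearMap
  have hi1 : ∀ ξ, i1 ξ = WithLp.toLp 2 (ξ, 0) := fun ξ => rfl
  have hi2 : ∀ h, i2 h = WithLp.toLp 2 (0, h) := fun ξ => rfl
  have hi : ∀ ξ h, WithLp.toLp 2 (ξ, h) = i1 ξ + i2 h := by
    intro ξ h
    rw [hi1, hi2, ← WithLp.toLp_add]; simp
  have hp1 : ∀ q, p1 q = q.fst := fun q => rfl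
  have hp2 : ∀ q, p2 q = q.snd := fun q => rfl
  let Z : ℂ × ℂ → H →L[ℂ] H := fun l => l.1 • P1 + l.2 • P2
  have hZ : ∀ l h, Z l h = l.1 • P1 h + l.2 • P2 h := fun l h => rfl
  let D : H →L[ℂ] H := p2 ∘L V ∘L i2
  have hni2 : ∀ h, ‖i2 h‖ = ‖h‖ := by
    intro h
    rw [← sq_eq_sq₀ (norm_nonneg _) (norm_nonneg _), hi2, WithLp.prod_norm_sq_eq_of_L2]
    simp
  have hnp2 : ∀ q, ‖p2 q‖ ≤ ‖q‖ := by
    intro q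
    rw [← sq_le_sq₀ (norm_nonneg _) (norm_nonneg _), hp2, WithLp.prod_norm_sq_eq_of_L2]
    nlinarith [sq_nonneg ‖q.fst‖]
  have hD : ∀ h, ‖D h‖ ≤ ‖h‖ := fun h => by
    calc ‖D h‖ ≤ ‖V (i2 h)‖ := hnp2 _
      _ ≤ ‖i2 h‖ := hV _
      _ = ‖h‖ := hni2 h
  have hDZ : ∀ l ∈ Bidisk, ‖D * Z l‖ < 1 := by
    intro l hl
    refine lt_of_le_of_lt (ContinuousLinearMap.opNorm_le_bound _
      (le_max_of_le_left (norm_nonneg l.1)) fun h => ?_) (max_lt hl.1 hl.2)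
    exact (hD _).trans (hP _ _ _)
  let Rs : ℂ × ℂ → H →L[ℂ] H := fun l => Ring.inverse (1 - D * Z l)
  have hunit : ∀ l ∈ Bidisk, IsUnit (1 - D * Z l) := fun l hl => isUnit_one_sub_of_norm_lt_one (hDZ l hl)
  have hR1 : ∀ l ∈ Bidisk, ∀ h, Rs l h - D (Z l (Rs l h)) = h := by
    intro l hl h
    have := Ring.mul_inverse_cancel _ (hunit l hl)
    have := congrArg (fun T : H →L[ℂ] H => T h) this
    simpa using this
  have hR2 : ∀ l ∈ Bidisk, ∀ h, Rs l (h - D (Z l h)) = h := by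
    intro l hl h
    have := Ring.inverse_mul_cancel _ (hunit l hl)
    have := congrArg (fun T : H →L[ℂ] H => T h) this
    simpa using this
  have hRd : ∀ l ∈ Bidisk, DifferentiableAt ℂ Rs l := by
    intro l hl
    refine DifferentiableAt.inverse ?_ (hunit l hl)
    fun_prop
  let hh : EuclideanSpace ℂ (Fin N) → ℂ × ℂ → H := fun ξ l => Rs l (p2 (V (i1 ξ)))
  let G : EuclideanSpace ℂ (Fin N) → ℂ × ℂ → ℂ := fun ξ l => p1 (V (i1 ξ + i2 (Z l (hh ξ l))))
  have hGadd : ∀ l, ∀ ξ η, G (ξ + η) l = G ξ l + G η l := by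
    intro l ξ η
    simp only [G, hh, map_add]; ring
  have hGsmul : ∀ l, ∀ (c : ℂ) ξ, G (c • ξ) l = c * G ξ l := by
    intro l c ξ
    simp only [G, hh, map_smul, map_add, smul_eq_mul]; ring
  have hGsum : ∀ l ξ, G ξ l = ∑ i, G (EuclideanSpace.single i 1) l * ξ i := by
    intro l ξ
    let Gl : EuclideanSpace ℂ (Fin N) →ₗ[ℂ] ℂ :=
      { toFun := fun ξ => G ξ l, map_add' := hGadd l, map_smul' := hGsmul l }
    have e : ξ = ∑ i, ξ i • EuclideanSpace.single i (1 : ℂ) := by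
      ext j
      simp [Finset.sum_apply, Pi.single_apply]
    have : Gl ξ = ∑ i, ξ i • Gl (EuclideanSpace.single i (1 : ℂ)) := by
      conv_lhs => rw [e]
      simp only [map_sum, map_smul]
    refine this.trans (Finset.sum_congr rfl fun i _ => ?_)
    rw [smul_eq_mul, mul_comm]; rfl
  have hfix : ∀ l ∈ Bidisk, ∀ ξ, V (i1 ξ + i2 (Z l (hh ξ l))) = WithLp.toLp 2 (G ξ l, hh ξ l) := by
    intro l hl ξ
    have h1 : p2 (V (i1 ξ + i2 (Z l (hh ξ l)))) = hh ξ l := by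
      rw [map_add, map_add]
      have := hR1 l hl (p2 (V (i1 ξ)))
      exact (sub_eq_iff_eq_add.mp this).symm
    conv_rhs => rw [← h1]
    rfl
  refine ⟨fun i l => G (EuclideanSpace.single i 1) l, ?_, ?_, ?_⟩
  · intro i l hl
    apply DifferentiableAt.differentiableWithinAt
    have := hRd l hl
    simp only [G, hh, Z]
    fun_prop
  · intro l hl ξ h c hyp
    rw [← hGsum]
    rw [← hZ, hi] at hyp
    have h1 : p2 (V (i1 ξ + i2 (Z l h))) = h := by rw [hyp]; rfl
    have h2 : hh ξ l = h := by
      rw [map_add, map_add] at h1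
      have : p2 (V (i1 ξ)) = h - D (Z l h) := eq_sub_of_add_eq h1
      simp only [hh]
      rw [this, hR2 l hl]
    simp only [G]
    rw [h2, hyp]; rfl
  · intro l hl
    have hcon : ∀ ξ, ‖G ξ l‖ ^ 2 ≤ ‖ξ‖ ^ 2 := by
      intro ξ
      have h1 := hV (i1 ξ + i2 (Z l (hh ξ l)))
      rw [hfix l hl, ← hi, ← sq_le_sq₀ (norm_nonneg _) (norm_nonneg _),
        WithLp.prod_norm_sq_eq_of_L2, WithLp.prod_norm_sq_eq_of_L2] at h1
      change ‖G ξ l‖ ^ 2 + ‖hh ξ l‖ ^ 2 ≤ ‖ξ‖ ^ 2 + ‖Z l (hh ξ l)‖ ^ 2 at h1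
      have h2 : ‖Z l (hh ξ l)‖ ≤ ‖hh ξ l‖ := by
        refine (hP l.1 l.2 (hh ξ l)).trans ?_
        have := (max_lt hl.1 hl.2).le
        nlinarith [norm_nonneg (hh ξ l)]
      have h3 : ‖Z l (hh ξ l)‖ ^ 2 ≤ ‖hh ξ l‖ ^ 2 := by gcongr
      linarith
    set s := ∑ i, ‖G (EuclideanSpace.single i 1) l‖ ^ 2 with hs
    have hs0 : 0 ≤ s := Finset.sum_nonneg fun i _ => by positivity
    have h1 := hcon (WithLp.toLp 2 fun i => starRingEnd ℂ (G (EuclideanSpace.single i 1) l))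
    rw [hGsum, EuclideanSpace.norm_sq_eq] at h1
    have e1 : ∑ i, G (EuclideanSpace.single i 1) l * starRingEnd ℂ (G (EuclideanSpace.single i 1) l)
        = (s : ℂ) := by
      rw [hs]; push_cast
      exact Finset.sum_congr rfl fun i _ => Complex.mul_conj' _
    simp only [RCLike.norm_conj] at h1
    rw [e1, ← hs, Complex.norm_real, Real.norm_of_nonneg hs0] at h1
    by_contra hlt
    push Not at hlt
    nlinarith

lemma gram_norm {X P : Type*} [NormedAddCommGroup P] [InnerProductSpace ℂ P] (f : X → P)
    (c : X →₀ ℂ) : ((‖Finsupp.linearCombination ℂ f c‖ ^ 2 : ℝ) : ℂ) =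
      ∑ x : c.support, ∑ y : c.support,
        c x * starRingEnd ℂ (c y) * inner ℂ (f y) (f x) := by
  have h : ((‖Finsupp.linearCombination ℂ f c‖ ^ 2 : ℝ) : ℂ) =
      inner ℂ (Finsupp.linearCombination ℂ f c) (Finsupp.linearCombination ℂ f c) := by
    rw [inner_self_eq_norm_sq_to_K]; push_cast; rfl
  have e : Finsupp.linearCombination ℂ f c = ∑ x : c.support, c x • f x := by
    rw [Finsupp.linearCombination_apply, Finsupp.sum, ← Finset.sum_coe_sort]
  rw [h, e, inner_sum]
  refine Finset.sum_congr rfl fun x _ => ?_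
  rw [sum_inner]
  refine Finset.sum_congr rfl fun y _ => ?_
  rw [inner_smul_left, inner_smul_right]
  ring

lemma gram_le {X P Q : Type*} [NormedAddCommGroup P] [InnerProductSpace ℂ P]
    [NormedAddCommGroup Q] [InnerProductSpace ℂ Q] (f : X → P) (g : X → Q) {T : X → X → ℂ}
    (hT : PSDk T) (h : ∀ x y, inner ℂ (f y) (f x) = inner ℂ (g y) (g x) + T x y) (c : X →₀ ℂ) :
    ‖Finsupp.linearCombination ℂ g c‖ ≤ ‖Finsupp.linearCombination ℂ f c‖ := by
  have h1 := (hT.comp (Subtype.val : c.support → X)).fintype (fun x => c x)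
  have h2 : ((‖Finsupp.linearCombination ℂ f c‖ ^ 2 - ‖Finsupp.linearCombination ℂ g c‖ ^ 2 : ℝ) : ℂ)
      = ∑ x : c.support, ∑ y : c.support, c x * starRingEnd ℂ (c y) * T x y := by
    rw [Complex.ofReal_sub, gram_norm, gram_norm, ← Finset.sum_sub_distrib]
    refine Finset.sum_congr rfl fun x _ => ?_
    rw [← Finset.sum_sub_distrib]
    refine Finset.sum_congr rfl fun y _ => ?_
    rw [h]; ring
  rw [← h2] at h1
  have h3 : (0 : ℝ) ≤ ‖Finsupp.linearCombination ℂ f c‖ ^ 2 - ‖Finsupp.linearCombination ℂ g c‖ ^ 2 :=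
    by exact_mod_cast h1
  exact le_of_sq_le_sq (by linarith) (norm_nonneg _)

lemma corona_hard {N : ℕ} (φ : Fin N → ℂ × ℂ → ℂ) (δ : ℝ) (hδ : 0 < δ)
    (hyp : ∀ k : ℂ × ℂ → ℂ × ℂ → ℂ, IsAdmissibleKernel k →
      IsPSDKernel (fun zeta lam =>
        ((∑ i, φ i zeta * starRingEnd ℂ (φ i lam)) - (δ : ℂ)) * k zeta lam)) :
    ∃ ψ : Fin N → ℂ × ℂ → ℂ,
      (∀ i, DifferentiableOn ℂ (ψ i) Bidisk) ∧
      (∀ z ∈ Bidisk, ∑ i, ψ i z * φ i z = 1) ∧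
      (∀ z ∈ Bidisk, ∑ i, ‖ψ i z‖ ^ 2 ≤ 1 / δ) := by
  classical
  obtain ⟨G, D, T, hG, hD, hT, hM⟩ := agler_decomp (X := Bidisk) (fun x => x.1.1) (fun x => x.1.2)
    (fun x => x.2.1) (fun x => x.2.2)
    (fun x y => (∑ i, φ i x.1 * starRingEnd ℂ (φ i y.1)) - (δ : ℂ))
    (fun p q => by
      simp only [map_sub, map_sum, map_mul, Complex.conj_conj, Complex.conj_ofReal]
      congr 1
      exact Finset.sum_congr rfl fun i _ => mul_comm _ _)
    (by
      intro F κ h0 h1 h2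
      let e : F → ℂ × ℂ := fun p => p.1.1
      have he : Function.Injective e := fun p q h => Subtype.ext (Subtype.ext h)
      let push : (F → F → ℂ) → ℂ × ℂ → ℂ × ℂ → ℂ := fun κ x x' =>
        ∑ p, ∑ q, (if x = e p then (1 : ℂ) else 0) * (if x' = e q then (1 : ℂ) else 0) * κ p q
      have hpush : ∀ (κ' : F → F → ℂ), PSDk κ' → IsPSDKernel (push κ') := by
        intro κ' h n mu _ a
        exact push_psd h.fintype e n mu a
      have hmul : ∀ m : ℂ × ℂ → ℂ × ℂ → ℂ, (fun x x' => m x x' * push κ x x')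
          = push (fun p q => m (e p) (e q) * κ p q) := by
        intro m
        funext x x'
        simp only [push, Finset.mul_sum]
        refine Finset.sum_congr rfl fun p _ => Finset.sum_congr rfl fun q _ => ?_
        by_cases a : x = e p
        · by_cases b : x' = e q
          · simp [a, b]
          · simp [b]
        · simp [a]
      have had : IsAdmissibleKernel (push κ) := by
        refine ⟨hpush κ h0, ?_, ?_⟩
        · have := hmul (fun zeta lam => 1 - zeta.1 * starRingEnd ℂ lam.1)
          rw [this]
          exact hpush _ h1
        · have := hmul (fun zeta lam => 1 - zeta.2 * starRingEnd ℂ lam.2)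
          rw [this]
          exact hpush _ h2
      have fin := hyp _ had
      intro n mu a
      have := fin n (fun i => e (mu i)) (fun i => (mu i).1.2) a
      refine this.trans_eq ?_
      refine Finset.sum_congr rfl fun i _ => Finset.sum_congr rfl fun j _ => ?_
      have := push_apply κ he (mu i) (mu j)
      simp only [push]
      rw [this])
  obtain ⟨H1, _, _, _, u, hu⟩ := kolmogorov hG
  obtain ⟨H2, _, _, _, v, hv⟩ := kolmogorov hD
  let H := WithLp 2 (H1 × H2)
  let ee := WithLp.prodContinuousLinearEquiv 2 ℂ H1 H2
  let P1 : H →L[ℂ] H := ee.symm.toContinuousLinearMap ∘L ContinuousLinearMap.inl ℂ H1 H2 ∘L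
    ContinuousLinearMap.fst ℂ H1 H2 ∘L ee.toContinuousLinearMap
  let P2 : H →L[ℂ] H := ee.symm.toContinuousLinearMap ∘L ContinuousLinearMap.inr ℂ H1 H2 ∘L
    ContinuousLinearMap.snd ℂ H1 H2 ∘L ee.toContinuousLinearMap
  have hcomb : ∀ (z w : ℂ) (h : H), z • P1 h + w • P2 h = WithLp.toLp 2 (z • h.fst, w • h.snd) := by
    intro z w h
    have a1 : P1 h = WithLp.toLp 2 (h.fst, 0) := rfl
    have a2 : P2 h = WithLp.toLp 2 (0, h.snd) := rfl
    rw [a1, a2, ← WithLp.toLp_smul, ← WithLp.toLp_smul, ← WithLp.toLp_add]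
    simp
  have hP : ∀ (z w : ℂ) (h : H), ‖z • P1 h + w • P2 h‖ ≤ max ‖z‖ ‖w‖ * ‖h‖ := by
    intro z w h
    rw [hcomb]
    have m0 : 0 ≤ max ‖z‖ ‖w‖ := le_max_of_le_left (norm_nonneg _)
    refine le_of_sq_le_sq ?_ (mul_nonneg m0 (norm_nonneg _))
    rw [mul_pow, WithLp.prod_norm_sq_eq_of_L2, WithLp.prod_norm_sq_eq_of_L2]
    change ‖z • h.fst‖ ^ 2 + ‖w • h.snd‖ ^ 2 ≤ _
    rw [norm_smul, norm_smul, mul_add, mul_pow, mul_pow]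
    gcongr
    · exact le_max_left _ _
    · exact le_max_right _ _
  let h : Bidisk → H := fun x => WithLp.toLp 2 (u x, v x)
  let f : Bidisk → WithLp 2 (EuclideanSpace ℂ (Fin N) × H) := fun x =>
    WithLp.toLp 2 (WithLp.toLp 2 (fun i => φ i x.1), x.1.1 • P1 (h x) + x.1.2 • P2 (h x))
  let g : Bidisk → WithLp 2 (ℂ × H) := fun x => WithLp.toLp 2 (((Real.sqrt δ : ℝ) : ℂ), h x)
  have hs : ((Real.sqrt δ : ℝ) : ℂ) * ((Real.sqrt δ : ℝ) : ℂ) = δ := by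
    rw [← Complex.ofReal_mul, Real.mul_self_sqrt hδ.le]
  have hs0 : ((Real.sqrt δ : ℝ) : ℂ) ≠ 0 := by
    simpa using (Real.sqrt_pos.mpr hδ).ne'
  have hgram : ∀ x y, inner ℂ (f y) (f x) = inner ℂ (g y) (g x) + T x y := by
    intro x y
    have := hM x y
    have ih : ∀ a b c d, inner ℂ (WithLp.toLp 2 (a, b) : H) (WithLp.toLp 2 (c, d) : H)
        = inner ℂ a c + inner ℂ b d := fun _ _ _ _ => rfl
    have hc : ∀ (z w : ℂ) x, z • P1 (h x) + w • P2 (h x) = WithLp.toLp 2 (z • u x, w • v x) :=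
      fun z w x => hcomb z w (h x)
    simp only [f, g, hc, WithLp.prod_inner_apply, h, ih, inner_smul_left, inner_smul_right, hu, hv,
      PiLp.inner_apply, RCLike.inner_apply, Complex.conj_ofReal, hs]
    linear_combination this
  obtain ⟨V, hV, hVL⟩ := contraction_ext _ _ (gram_le f g hT hgram)
  obtain ⟨t, ht1, ht2, ht3⟩ := transfer V hV P1 P2 hP
  refine ⟨fun i l => t i l / ((Real.sqrt δ : ℝ) : ℂ), fun i => by
    simp only [div_eq_mul_inv]
    exact (ht1 i).mul_const _, ?_, ?_⟩
  · intro l hl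
    have h1 := hVL (Finsupp.single ⟨l, hl⟩ 1)
    simp only [Finsupp.linearCombination_single, one_smul] at h1
    have h2 := ht2 l hl _ _ _ h1
    simp only at h2
    rw [← div_self hs0]
    nth_rw 2 [← h2]
    rw [Finset.sum_div]
    exact Finset.sum_congr rfl fun i _ => by ring
  · intro l hl
    have h3 := ht3 l hl
    have : ∀ i, ‖t i l / ((Real.sqrt δ : ℝ) : ℂ)‖ ^ 2 = ‖t i l‖ ^ 2 / δ := by
      intro i
      rw [norm_div, div_pow, Complex.norm_real, Real.norm_of_nonneg (Real.sqrt_nonneg _),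
        Real.sq_sqrt hδ.le]
    simp only [this]
    rw [← Finset.sum_div]
    gcongr

/-- **Toeplitz-corona theorem on the bidisk.** For bounded analytic `φ₁, …, φ_N` on `𝔻²`
and `δ > 0`, the kernel `(ζ,λ) ↦ [∑ᵢ φᵢ(ζ)φᵢ(λ)~ - δ] k(ζ,λ)` is positive semi-definite
for every admissible kernel `k` if and only if there are analytic `ψ₁, …, ψ_N` on `𝔻²`
with `∑ᵢ ψᵢφᵢ = 1` and `sup_{𝔻²} ∑ᵢ |ψᵢ|² ≤ 1/δ`. -/
theorem toeplitz_corona_bidisk {N : ℕ} (φ : Fin N → ℂ × ℂ → ℂ)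
    (hφ : ∀ i, DifferentiableOn ℂ (φ i) Bidisk)
    (hφb : ∀ i, ∃ C : ℝ, ∀ z ∈ Bidisk, ‖φ i z‖ ≤ C)
    (δ : ℝ) (hδ : 0 < δ) :
    (∀ k : ℂ × ℂ → ℂ × ℂ → ℂ, IsAdmissibleKernel k →
      IsPSDKernel (fun zeta lam =>
        ((∑ i, φ i zeta * starRingEnd ℂ (φ i lam)) - (δ : ℂ)) * k zeta lam)) ↔
    ∃ ψ : Fin N → ℂ × ℂ → ℂ,
      (∀ i, DifferentiableOn ℂ (ψ i) Bidisk) ∧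
      (∀ z ∈ Bidisk, ∑ i, ψ i z * φ i z = 1) ∧
      (∀ z ∈ Bidisk, ∑ i, ‖ψ i z‖ ^ 2 ≤ 1 / δ) := by
  constructor
  · exact corona_hard φ δ hδ
  · rintro ⟨ψ, h1, h2, h3⟩ k hk
    exact corona_easy φ ψ δ hδ h1 h2 h3 k hk
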